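/- There exists a real constant c > 0 with the following property: for every real C > 0 there is an N such that for every integer n ≥ N there exist an integer t with t ≥ C·exp(n^c) and integers m_1 < m_1' < m_2 < m_2' < ⋯ < m_t < m_t', all at least n+2, such that δ_1(n, m_j + 1) > δ_1(n, m_j) and δ_1(n, m_j' + 1) < δ_1(n, m_j') for every 1 ≤ j ≤ t. In particular, the sequence (δ_1(n,m))_{m ≥ n+2} has superpolynomially many (in n) local maxima, and is thus very far from unimodal. -/

import Mathlib

/-- `Llcm n m` is the least common multiple of the integers strictly between `n` and `m`,
i.e. of `{n+1, ..., m-1}`. -/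
def Llcm (n m : ℕ) : ℕ := (Finset.Ioo n m).lcm id

/-- `delta r n m` is the density `δ_r(n,m)` of positive integers with exactly `r`
divisors in the open interval `(n, m)`: the proportion of `x ∈ {1, ..., Llcm n m}`
having exactly `r` divisors `d` with `n < d < m`. -/
def delta (r n m : ℕ) : ℚ :=
  (((Finset.Icc 1 (Llcm n m)).filter
      (fun x => ((Finset.Ioo n m).filter (fun d => d ∣ x)).card = r)).card : ℚ) /
    (Llcm n m : ℚ)

/-!
If `m > n` is prime, adding `m` to the divisors that count turns a proportion `1 / m` of the
integers without divisors in `(n, m)` into integers with exactly one, at the expense of the same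
proportion of those which had one; so `δ₁` increases at `m` as soon as `δ₁(n, m) < δ₀(n, m)`. If
`m = 2 * p` with `p > n` prime, then the multiples of `m` already have the divisor `p`, so `δ₁`
decreases at `m`.

A sieve shows `δ₁(n, m) < δ₀(n, m)` for `log m` near `U = n ^ (1 / 100)`. Relative to the integers
free of prime factors below `m`, their multiples by `s ≤ n` have density about `log n` and no
divisor in `(n, m)`. The integers with exactly one such divisor have relative density at most
`O(log log m)`, from those divisible by a prime in `(n, m)`, plus a small fraction of `log n`, from
the others: these are `q * b * y` with `y` free of prime factors below `m`, `q ≤ n` prime, `b ≤ n`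
free of prime factors below `q` and `n < q * b`.

Finally, with `U = L ^ 20`, the bound `ζ'/ζ = O(L ^ 9)` in the region `re s ≥ 1 - κ / L ^ 9`,
`1 ≤ |im s| ≤ exp L`, gives a prime in every logarithmic interval of length about `exp (-L)` near
`U`. Hence primes and doubled primes can be made to alternate about `exp L` times.
-/

/-! ### Densities over a common period -/

section Density

open Finset

/-- The number of divisors of `x` in the open interval `(n, m)`. -/
def divCount (n m x : ℕ) : ℕ := #{d ∈ Ioo n m | d ∣ x}

lemma Llcm_dvd_iff {n m M : ℕ} : Llcm n m ∣ M ↔ ∀ d, n < d → d < m → d ∣ M := by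
  simp [Llcm, Finset.lcm_dvd_iff]

lemma dvd_Llcm {n m d : ℕ} (hnd : n < d) (hdm : d < m) : d ∣ Llcm n m :=
  Llcm_dvd_iff.1 dvd_rfl d hnd hdm

lemma Llcm_pos (n m : ℕ) : 0 < Llcm n m :=
  Nat.pos_of_ne_zero <| Finset.lcm_ne_zero_iff.2 fun _ hd =>
    (Nat.zero_le n).trans_lt (mem_Ioo.1 hd).1 |>.ne'

lemma card_filter_Icc_mul_of_periodic {p : ℕ → Prop} [DecidablePred p] {M : ℕ}
    (hp : Function.Periodic p M) (k : ℕ) :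
    #{x ∈ Icc 1 (k * M) | p x} = k * #{x ∈ Icc 1 M | p x} := by
  have card_eq_count : ∀ N, Function.Periodic p N → #{x ∈ Icc 1 N | p x} = N.count p := by
    intro N hN
    rw [← Nat.filter_Ico_card_eq_of_periodic 1 N p hN, add_comm, Finset.Ico_add_one_right_eq_Icc]
  have hkM : ∀ k : ℕ, Function.Periodic p (k * M) := fun k => by simpa using hp.nat_mul k
  rw [card_eq_count M hp, card_eq_count _ (hkM k)]
  clear card_eq_count
  induction k with
  | zero => simp
  | succ k ih =>
    rw [Nat.add_mul, one_mul, Nat.count_add, ih, Nat.add_mul, one_mul]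
    congr 2
    funext j
    rw [add_comm, hkM k j]

lemma periodic_divCount {n m M : ℕ} (hM : Llcm n m ∣ M) :
    Function.Periodic (divCount n m) M := by
  intro x
  unfold divCount
  congr 1
  refine filter_congr fun d hd => ?_
  obtain ⟨hnd, hdm⟩ := mem_Ioo.1 hd
  exact Nat.dvd_add_left (Llcm_dvd_iff.1 hM d hnd hdm)

lemma delta_eq_card_div_of_dvd {n m M : ℕ} (hM : Llcm n m ∣ M) (hM0 : 0 < M) (r : ℕ) :
    delta r n m = (#{x ∈ Icc 1 M | divCount n m x = r} : ℚ) / M := by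
  obtain ⟨k, rfl⟩ := hM
  have hk : 0 < k := Nat.pos_of_mul_pos_left hM0
  have hper : Function.Periodic (fun x => divCount n m x = r) (Llcm n m) := fun x => by
    simp only [periodic_divCount dvd_rfl x]
  rw [mul_comm (Llcm n m) k, card_filter_Icc_mul_of_periodic hper]
  unfold delta divCount
  push_cast
  rw [mul_div_mul_left _ _ (by exact_mod_cast hk.ne')]

lemma delta_lt_delta_iff {n m m' r r' M : ℕ} (hM : Llcm n m ∣ M) (hM' : Llcm n m' ∣ M)
    (hM0 : 0 < M) :
    delta r n m < delta r' n m' ↔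
      #{x ∈ Icc 1 M | divCount n m x = r} < #{x ∈ Icc 1 M | divCount n m' x = r'} := by
  rw [delta_eq_card_div_of_dvd hM hM0, delta_eq_card_div_of_dvd hM' hM0,
    div_lt_div_iff_of_pos_right (by positivity), Nat.cast_lt]

lemma divCount_add_one_right {n m : ℕ} (hnm : n < m) (x : ℕ) :
    divCount n (m + 1) x = divCount n m x + if m ∣ x then 1 else 0 := by
  rw [divCount, Finset.Ioo_add_one_right_eq_Ioc, ← Ioo_insert_right hnm, filter_insert]
  split_ifs
  · rw [card_insert_of_notMem (by simp), divCount]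
  · rfl

lemma divCount_eq_one_iff {n m x : ℕ} :
    divCount n m x = 1 ↔ ∃! d, n < d ∧ d < m ∧ d ∣ x := by
  simp only [divCount, card_eq_one, Finset.ext_iff, mem_filter, mem_Ioo, mem_singleton, and_assoc]
  refine exists_congr fun d => ⟨fun h => ⟨(h d).2 rfl, fun d' => (h d').1⟩, ?_⟩
  rintro ⟨hd, huniq⟩ d'
  exact ⟨huniq d', by rintro rfl; exact hd⟩

lemma divCount_prime_mul {n m : ℕ} (hm : m.Prime) (y : ℕ) :
    divCount n m (m * y) = divCount n m y := by
  unfold divCount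
  congr 1
  refine filter_congr fun d hd => ?_
  obtain ⟨hnd, hdm⟩ := mem_Ioo.1 hd
  have hcop : Nat.Coprime d m := (Nat.coprime_of_lt_prime (by omega) hdm hm).symm
  exact ⟨hcop.dvd_of_dvd_mul_left, fun h => h.mul_left m⟩

lemma card_filter_dvd_Icc_mul {m : ℕ} (hm : 0 < m) (M : ℕ) (q : ℕ → Prop) [DecidablePred q] :
    #{x ∈ Icc 1 (m * M) | m ∣ x ∧ q x} = #{y ∈ Icc 1 M | q (m * y)} := by
  symm
  refine card_bij (fun y _ => m * y) ?_ (fun a _ b _ => Nat.eq_of_mul_eq_mul_left hm) ?_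
  · intro y hy
    simp only [mem_filter, mem_Icc] at hy ⊢
    exact ⟨⟨Nat.mul_pos hm hy.1.1, Nat.mul_le_mul_left m hy.1.2⟩, dvd_mul_right m y, hy.2⟩
  · intro x hx
    simp only [mem_filter, mem_Icc] at hx
    obtain ⟨⟨hx1, hxM⟩, ⟨y, rfl⟩, hqy⟩ := hx
    refine ⟨y, ?_, rfl⟩
    simp only [mem_filter, mem_Icc]
    exact ⟨⟨Nat.pos_of_mul_pos_left hx1, Nat.le_of_mul_le_mul_left hxM hm⟩, hqy⟩

lemma card_divCount_eq_one_add_card {n m M : ℕ} (hm : m.Prime) (hnm : n < m) :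
    #{x ∈ Icc 1 (m * M) | divCount n (m + 1) x = 1} + #{x ∈ Icc 1 M | divCount n m x = 1} =
      #{x ∈ Icc 1 (m * M) | divCount n m x = 1} + #{x ∈ Icc 1 M | divCount n m x = 0} := by
  have split : ∀ (q : ℕ → Prop) [DecidablePred q], #{x ∈ Icc 1 (m * M) | q x} =
      #{x ∈ Icc 1 (m * M) | m ∣ x ∧ q x} + #{x ∈ Icc 1 (m * M) | ¬ m ∣ x ∧ q x} := by
    intro q _
    rw [← card_filter_add_card_filter_not (s := {x ∈ Icc 1 (m * M) | q x}) (p := (m ∣ ·)),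
      filter_filter, filter_filter]
    simp only [and_comm]
  have restrict : ∀ r, #{x ∈ Icc 1 (m * M) | m ∣ x ∧ divCount n m x = r} =
      #{x ∈ Icc 1 M | divCount n m x = r} := fun r => by
    simp only [card_filter_dvd_Icc_mul hm.pos, divCount_prime_mul hm]
  have gain : ∀ x, (m ∣ x ∧ divCount n (m + 1) x = 1) ↔ (m ∣ x ∧ divCount n m x = 0) :=
    fun x => and_congr_right fun hx => by simp [divCount_add_one_right hnm, hx]
  have keep : ∀ x, (¬ m ∣ x ∧ divCount n (m + 1) x = 1) ↔ (¬ m ∣ x ∧ divCount n m x = 1) :=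
    fun x => and_congr_right fun hx => by simp [divCount_add_one_right hnm, hx]
  rw [split (divCount n (m + 1) · = 1), split (divCount n m · = 1)]
  simp only [gain, keep, restrict]
  ring

lemma delta_one_lt_add_one_of_prime {n m : ℕ} (hm : m.Prime) (hnm : n < m)
    (h : delta 1 n m < delta 0 n m) : delta 1 n m < delta 1 n (m + 1) := by
  have hL0 : 0 < Llcm n m := Llcm_pos n m
  have hdvd : Llcm n (m + 1) ∣ m * Llcm n m := by
    refine Llcm_dvd_iff.2 fun d hnd hdm => ?_
    rcases Nat.lt_succ_iff_lt_or_eq.1 hdm with hdm | rfl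
    · exact (dvd_Llcm hnd hdm).mul_left m
    · exact dvd_mul_right _ _
  rw [delta_lt_delta_iff dvd_rfl dvd_rfl hL0] at h
  rw [delta_lt_delta_iff (dvd_mul_left _ m) hdvd (Nat.mul_pos hm.pos hL0)]
  have := card_divCount_eq_one_add_card (M := Llcm n m) hm hnm
  omega

lemma divCount_two_mul_prime {n p : ℕ} (hn : 2 ≤ n) (hp : p.Prime) (hnp : n < p) :
    divCount n (2 * p) (2 * p) = 1 := by
  refine divCount_eq_one_iff.2 ⟨p, ⟨hnp, by omega, dvd_mul_left p 2⟩, ?_⟩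
  rintro d ⟨hnd, hd2p, hdvd⟩
  by_cases hpd : p ∣ d
  · obtain ⟨k, rfl⟩ := hpd
    have hk2 : k < 2 := Nat.lt_of_mul_lt_mul_left (a := p) (by omega)
    interval_cases k <;> omega
  · have hcop : d.Coprime p := ((Nat.Prime.coprime_iff_not_dvd hp).2 hpd).symm
    have := Nat.le_of_dvd two_pos (hcop.dvd_of_dvd_mul_right hdvd)
    omega

lemma delta_one_add_one_lt_of_two_mul_prime {n p : ℕ} (hn : 2 ≤ n) (hp : p.Prime)
    (hnp : n < p) : delta 1 n (2 * p + 1) < delta 1 n (2 * p) := by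
  have hn2p : n < 2 * p := by omega
  have hL0 : 0 < Llcm n (2 * p + 1) := Llcm_pos _ _
  have hL : Llcm n (2 * p) ∣ Llcm n (2 * p + 1) :=
    Llcm_dvd_iff.2 fun d hnd hdp => dvd_Llcm hnd (by omega)
  rw [delta_lt_delta_iff dvd_rfl hL hL0]
  refine card_lt_card ((ssubset_iff_of_subset ?_).2 ⟨2 * p, ?_, ?_⟩)
  · refine monotone_filter_right _ fun x _ hx => ?_
    by_cases hdvd : 2 * p ∣ x
    · have hpos : 0 < divCount n (2 * p) x := card_pos.2
        ⟨p, by simp only [mem_filter, mem_Ioo]; exact ⟨⟨hnp, by omega⟩, dvd_of_mul_left_dvd hdvd⟩⟩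
      rw [divCount_add_one_right hn2p, if_pos hdvd] at hx
      omega
    · rwa [divCount_add_one_right hn2p, if_neg hdvd] at hx
  · simp only [mem_filter, mem_Icc]
    exact ⟨⟨by omega, Nat.le_of_dvd hL0 (dvd_Llcm hn2p (by omega))⟩,
      divCount_two_mul_prime hn hp hnp⟩
  · simp [divCount_add_one_right hn2p, divCount_two_mul_prime hn hp hnp]

end Density

/-! ### Reciprocal sums over primes and over integers free of small primes -/

section ReciprocalSums

open Finset

lemma natLog_two_mul_log_two_le (n : ℕ) : Nat.log 2 n * Real.log 2 ≤ Real.log n :=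
  (le_div_iff₀ (Real.log_pos one_lt_two)).1 (by exact_mod_cast Real.natLog_le_logb n 2)

lemma log_le_natLog_two_add_one_mul_log_two (n : ℕ) :
    Real.log n ≤ (Nat.log 2 n + 1) * Real.log 2 := by
  rcases Nat.eq_zero_or_pos n with rfl | hn
  · simpa using (Real.log_pos one_lt_two).le
  have hlt : (n : ℝ) ≤ 2 ^ (Nat.log 2 n + 1) := by
    exact_mod_cast (Nat.lt_pow_succ_log_self one_lt_two n).le
  simpa using Real.log_le_log (by positivity) hlt

lemma sum_inv_Icc_le_one_add_log (n : ℕ) : ∑ s ∈ Icc 1 n, (s : ℝ)⁻¹ ≤ 1 + Real.log n := by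
  simpa [harmonic_eq_sum_Icc] using harmonic_le_one_add_log n

lemma log_add_one_le_sum_inv_Icc (n : ℕ) : Real.log (n + 1) ≤ ∑ s ∈ Icc 1 n, (s : ℝ)⁻¹ := by
  simpa [harmonic_eq_sum_Icc] using log_add_one_le_harmonic n

lemma sum_log_le_of_natLog_eq {k : ℕ} {S : Finset ℕ}
    (hS : ∀ p ∈ S, p.Prime ∧ Nat.log 2 p = k) :
    ∑ p ∈ S, Real.log p ≤ 2 * Real.log 2 * 2 ^ (k + 1) := by
  have hpow : (0 : ℝ) ≤ 2 ^ (k + 1) := by positivity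
  have log_four : Real.log 4 = 2 * Real.log 2 := by
    rw [show (4 : ℝ) = 2 ^ 2 by norm_num, Real.log_pow, Nat.cast_two]
  calc ∑ p ∈ S, Real.log p ≤ Chebyshev.theta (2 ^ (k + 1)) := by
        refine sum_le_sum_of_subset_of_nonneg (fun p hp => ?_) fun p _ _ =>
          Real.log_natCast_nonneg p
        obtain ⟨hprime, rfl⟩ := hS p hp
        rw [mem_filter, mem_Ioc, Nat.le_floor_iff hpow]
        exact ⟨⟨hprime.pos, mod_cast (Nat.lt_pow_succ_log_self one_lt_two p).le⟩, hprime⟩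
    _ ≤ Real.log 4 * 2 ^ (k + 1) := Chebyshev.theta_le_log4_mul_x hpow
    _ = 2 * Real.log 2 * 2 ^ (k + 1) := by rw [log_four]

lemma sum_inv_prime_le_of_natLog_eq {k : ℕ} (hk : 1 ≤ k) {S : Finset ℕ}
    (hS : ∀ p ∈ S, p.Prime ∧ Nat.log 2 p = k) : ∑ p ∈ S, (p : ℝ)⁻¹ ≤ 4 / k := by
  have hk0 : (0 : ℝ) < k := by exact_mod_cast hk
  have inv_le : ∀ p ∈ S, (p : ℝ)⁻¹ ≤ Real.log p / (k * Real.log 2 * 2 ^ k) := by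
    intro p hp
    obtain ⟨hprime, rfl⟩ := hS p hp
    have hp0 : (0 : ℝ) < p := by exact_mod_cast hprime.pos
    have hpow : (2 : ℝ) ^ Nat.log 2 p ≤ p := by
      exact_mod_cast Nat.pow_log_le_self 2 hprime.ne_zero
    rw [inv_eq_one_div, div_le_div_iff₀ hp0 (by positivity), one_mul]
    exact mul_le_mul (natLog_two_mul_log_two_le p) hpow (by positivity)
      (Real.log_natCast_nonneg p)
  calc ∑ p ∈ S, (p : ℝ)⁻¹ ≤ ∑ p ∈ S, Real.log p / (k * Real.log 2 * 2 ^ k) :=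
        sum_le_sum inv_le
    _ = (∑ p ∈ S, Real.log p) / (k * Real.log 2 * 2 ^ k) := (sum_div _ _ _).symm
    _ ≤ (2 * Real.log 2 * 2 ^ (k + 1)) / (k * Real.log 2 * 2 ^ k) := by
        gcongr
        exact sum_log_le_of_natLog_eq hS
    _ = 4 / k := by rw [pow_succ]; field_simp; norm_num

lemma sum_weighted_inv_prime_le {S T : Finset ℕ} (hS : ∀ p ∈ S, p.Prime)
    (hST : ∀ p ∈ S, Nat.log 2 p ∈ T) (hT : ∀ k ∈ T, 1 ≤ k) {g : ℕ → ℝ} (hg : ∀ k, 0 ≤ g k) :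
    ∑ p ∈ S, g (Nat.log 2 p) * (p : ℝ)⁻¹ ≤ ∑ k ∈ T, g k * (4 / k) := by
  rw [← sum_fiberwise_of_maps_to hST]
  refine sum_le_sum fun k hk => ?_
  calc ∑ p ∈ S with Nat.log 2 p = k, g (Nat.log 2 p) * (p : ℝ)⁻¹
      = g k * ∑ p ∈ S with Nat.log 2 p = k, (p : ℝ)⁻¹ := by
        rw [mul_sum]
        exact sum_congr rfl fun p hp => by rw [(mem_filter.1 hp).2]
    _ ≤ g k * (4 / k) := by
        refine mul_le_mul_of_nonneg_left (sum_inv_prime_le_of_natLog_eq (hT k hk) ?_) (hg k)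
        exact fun p hp => ⟨hS p (mem_filter.1 hp).1, (mem_filter.1 hp).2⟩

lemma sum_inv_primesBelow_le (m : ℕ) :
    ∑ p ∈ m.primesBelow, (p : ℝ)⁻¹ ≤ 4 * (1 + Real.log (Nat.log 2 m)) := by
  have hST : ∀ p ∈ m.primesBelow, Nat.log 2 p ∈ Icc 1 (Nat.log 2 m) := fun p hp => by
    obtain ⟨hpm, hprime⟩ := Nat.mem_primesBelow.1 hp
    exact mem_Icc.2 ⟨Nat.log_pos one_lt_two hprime.two_le, Nat.log_mono_right hpm.le⟩
  calc ∑ p ∈ m.primesBelow, (p : ℝ)⁻¹ = ∑ p ∈ m.primesBelow, 1 * (p : ℝ)⁻¹ := by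
        simp only [one_mul]
    _ ≤ ∑ k ∈ Icc 1 (Nat.log 2 m), 1 * (4 / (k : ℝ)) :=
        sum_weighted_inv_prime_le (g := fun _ => 1) (fun p => Nat.prime_of_mem_primesBelow) hST
          (fun k hk => (mem_Icc.1 hk).1) fun _ => zero_le_one
    _ = 4 * ∑ k ∈ Icc 1 (Nat.log 2 m), (k : ℝ)⁻¹ := by
        simp only [one_mul, mul_sum, div_eq_mul_inv]
    _ ≤ 4 * (1 + Real.log (Nat.log 2 m)) := by
        gcongr
        exact sum_inv_Icc_le_one_add_log _

lemma sum_inv_primesBelow_filter_le {n m k : ℕ} (hk : 1 ≤ k)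
    (hkm : k + Nat.log 2 n + 1 = Nat.log 2 m) :
    ∑ p ∈ m.primesBelow with m ≤ p * n, (p : ℝ)⁻¹ ≤ 4 * (Nat.log 2 n + 2) / k := by
  have hST : ∀ p ∈ {p ∈ m.primesBelow | m ≤ p * n}, Nat.log 2 p ∈ Icc k (Nat.log 2 m) := by
    intro p hp
    rw [mem_filter, Nat.mem_primesBelow] at hp
    obtain ⟨⟨hpm, -⟩, hmpn⟩ := hp
    have hm : m < 2 ^ ((Nat.log 2 p + 1) + (Nat.log 2 n + 1)) := by
      rw [pow_add]
      exact hmpn.trans_lt (Nat.mul_lt_mul'' (Nat.lt_pow_succ_log_self one_lt_two p)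
        (Nat.lt_pow_succ_log_self one_lt_two n))
    have := Nat.log_lt_of_lt_pow (by omega) hm
    exact mem_Icc.2 ⟨by omega, Nat.log_mono_right hpm.le⟩
  have hcard : #(Icc k (Nat.log 2 m)) = Nat.log 2 n + 2 := by rw [Nat.card_Icc]; omega
  calc ∑ p ∈ m.primesBelow with m ≤ p * n, (p : ℝ)⁻¹
      = ∑ p ∈ m.primesBelow with m ≤ p * n, 1 * (p : ℝ)⁻¹ := by simp only [one_mul]
    _ ≤ ∑ j ∈ Icc k (Nat.log 2 m), 1 * (4 / (j : ℝ)) :=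
        sum_weighted_inv_prime_le (g := fun _ => 1)
          (fun p hp => Nat.prime_of_mem_primesBelow (mem_filter.1 hp).1) hST
          (fun _ hj => hk.trans (mem_Icc.1 hj).1) fun _ => zero_le_one
    _ ≤ ∑ _j ∈ Icc k (Nat.log 2 m), (4 : ℝ) / k := by
        refine sum_le_sum fun j hj => ?_
        rw [one_mul]
        have hkj : (k : ℝ) ≤ j := by exact_mod_cast (mem_Icc.1 hj).1
        gcongr
    _ = 4 * (Nat.log 2 n + 2) / k := by
        rw [sum_const, hcard, nsmul_eq_mul]
        push_cast
        ring

lemma sum_inv_prime_mul_log_le {S : Finset ℕ} {K : ℕ} (hK : 1 ≤ K)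
    (hS : ∀ p ∈ S, p.Prime ∧ 2 ^ K ≤ p) :
    ∑ p ∈ S, ((p : ℝ) * Real.log p)⁻¹ ≤ 8 / (K * Real.log 2) := by
  have hKlog : ∀ p ∈ S, K ≤ Nat.log 2 p := fun p hp =>
    (Nat.le_log_iff_pow_le one_lt_two (hS p hp).1.ne_zero).2 (hS p hp).2
  set N := S.sup (Nat.log 2)
  have hST : ∀ p ∈ S, Nat.log 2 p ∈ Ioo (K - 1) (N + 1) := fun p hp => by
    have := hKlog p hp
    have : Nat.log 2 p ≤ N := le_sup (f := Nat.log 2) hp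
    exact mem_Ioo.2 ⟨by omega, by omega⟩
  have hT : ∀ j ∈ Ioo (K - 1) (N + 1), 1 ≤ j := fun j hj => by
    have := (mem_Ioo.1 hj).1
    omega
  have inv_le : ∀ p ∈ S,
      ((p : ℝ) * Real.log p)⁻¹ ≤ (Nat.log 2 p * Real.log 2)⁻¹ * (p : ℝ)⁻¹ := fun p hp => by
    have hlog : (0 : ℝ) < Nat.log 2 p := by exact_mod_cast hK.trans (hKlog p hp)
    rw [mul_inv, mul_comm]
    gcongr
    exact natLog_two_mul_log_two_le p
  calc ∑ p ∈ S, ((p : ℝ) * Real.log p)⁻¹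
      ≤ ∑ p ∈ S, (Nat.log 2 p * Real.log 2)⁻¹ * (p : ℝ)⁻¹ := sum_le_sum inv_le
    _ ≤ ∑ j ∈ Ioo (K - 1) (N + 1), (j * Real.log 2)⁻¹ * (4 / (j : ℝ)) :=
        sum_weighted_inv_prime_le (g := fun j => (j * Real.log 2)⁻¹) (fun p hp => (hS p hp).1)
          hST hT fun _ => by positivity
    _ = 4 / Real.log 2 * ∑ j ∈ Ioo (K - 1) (N + 1), ((j : ℝ) ^ 2)⁻¹ := by
        rw [mul_sum]
        refine sum_congr rfl fun j hj => ?_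
        have hj0 : (0 : ℝ) < j := by exact_mod_cast hT j hj
        field_simp
    _ ≤ 4 / Real.log 2 * (2 / K) := by
        have := sum_Ioo_inv_sq_le (α := ℝ) (K - 1) (N + 1)
        rw [Nat.cast_sub hK, Nat.cast_one, sub_add_cancel] at this
        gcongr
    _ = 8 / (K * Real.log 2) := by field_simp; norm_num

lemma coprime_of_lt_of_coprime_primorial {m d y : ℕ} (hd0 : 0 < d) (hdm : d < m)
    (hy : y.Coprime (primorial (m - 1))) : d.Coprime y := by
  refine Nat.coprime_of_dvd fun r hr hrd hry => ?_
  have hrm : r ∣ primorial (m - 1) := hr.dvd_primorial_iff.2 (by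
    have := Nat.le_of_dvd hd0 hrd
    omega)
  exact Nat.not_coprime_of_dvd_of_dvd hr.one_lt hry hrm hy

lemma eq_of_mul_eq_mul_of_coprime_primorial {m s t y z : ℕ} (hs0 : 0 < s) (hsm : s < m)
    (ht0 : 0 < t) (htm : t < m) (hy : y.Coprime (primorial (m - 1)))
    (hz : z.Coprime (primorial (m - 1))) (h : s * y = t * z) : s = t ∧ y = z := by
  have hst : s ∣ t := (coprime_of_lt_of_coprime_primorial hs0 hsm hz).dvd_of_dvd_mul_right
    (h ▸ dvd_mul_right s y)
  have hts : t ∣ s := (coprime_of_lt_of_coprime_primorial ht0 htm hy).dvd_of_dvd_mul_right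
    (h ▸ dvd_mul_right t z)
  obtain rfl := Nat.dvd_antisymm hst hts
  exact ⟨rfl, Nat.eq_of_mul_eq_mul_left hs0 h⟩

-- The products `a * b` with `a < q` and `b ∈ R` are pairwise distinct and at most `n ^ 2`.
lemma sum_inv_mul_log_le_of_coprime_primorial {n q : ℕ} (hq : 1 ≤ q) (hqn : q ≤ n) {R : Finset ℕ}
    (hR : ∀ b ∈ R, 1 ≤ b ∧ b ≤ n ∧ b.Coprime (primorial (q - 1))) :
    (∑ b ∈ R, (b : ℝ)⁻¹) * Real.log q ≤ 1 + 2 * Real.log n := by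
  have hlog : Real.log q ≤ ∑ a ∈ Icc 1 (q - 1), (a : ℝ)⁻¹ := by
    simpa [Nat.cast_sub hq] using log_add_one_le_sum_inv_Icc (q - 1)
  have hinj : Set.InjOn (fun x : ℕ × ℕ => x.1 * x.2) ↑(Icc 1 (q - 1) ×ˢ R) := by
    rintro ⟨a, b⟩ hab ⟨a', b'⟩ hab' h
    simp only [mem_coe, mem_product, mem_Icc] at hab hab'
    rw [Prod.mk.injEq]
    exact eq_of_mul_eq_mul_of_coprime_primorial (by omega) (by omega) (by omega) (by omega)
      (hR _ hab.2).2.2 (hR _ hab'.2).2.2 h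
  have hsub : (Icc 1 (q - 1) ×ˢ R).image (fun x : ℕ × ℕ => x.1 * x.2) ⊆ Icc 1 (n * n) := by
    refine image_subset_iff.2 ?_
    rintro ⟨a, b⟩ hab
    rw [mem_product, mem_Icc] at hab
    obtain ⟨hb1, hbn, -⟩ := hR b hab.2
    exact mem_Icc.2 ⟨Nat.mul_pos hab.1.1 hb1, Nat.mul_le_mul (by omega) hbn⟩
  calc (∑ b ∈ R, (b : ℝ)⁻¹) * Real.log q
      ≤ (∑ b ∈ R, (b : ℝ)⁻¹) * ∑ a ∈ Icc 1 (q - 1), (a : ℝ)⁻¹ := by gcongr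
    _ = ∑ x ∈ Icc 1 (q - 1) ×ˢ R, ((x.1 * x.2 : ℕ) : ℝ)⁻¹ := by
        rw [mul_comm, sum_mul_sum, ← sum_product']
        simp only [Nat.cast_mul, mul_inv]
    _ = ∑ c ∈ (Icc 1 (q - 1) ×ˢ R).image (fun x : ℕ × ℕ => x.1 * x.2), (c : ℝ)⁻¹ := by
        rw [sum_image hinj]
    _ ≤ ∑ c ∈ Icc 1 (n * n), (c : ℝ)⁻¹ :=
        sum_le_sum_of_subset_of_nonneg hsub fun _ _ _ => by positivity
    _ ≤ 1 + Real.log ((n * n : ℕ) : ℝ) := sum_inv_Icc_le_one_add_log _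
    _ = 1 + 2 * Real.log n := by rw [← sq, Nat.cast_pow, Real.log_pow, Nat.cast_two]

/-- The possible cofactors `b` of the least prime factor `q` of a minimal divisor exceeding `n`:
integers `b ≤ n < q * b` all of whose prime factors are at least `q`. -/
def roughCofactors (n q : ℕ) : Finset ℕ :=
  {b ∈ Icc 1 n | n < q * b ∧ b.Coprime (primorial (q - 1))}

lemma sum_inv_roughCofactors_le (n q : ℕ) : ∑ b ∈ roughCofactors n q, (b : ℝ)⁻¹ ≤ q := by
  rcases Nat.eq_zero_or_pos n with rfl | hn
  · simp [roughCofactors]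
  have inv_le : ∀ b ∈ roughCofactors n q, (b : ℝ)⁻¹ ≤ q / n := fun b hb => by
    simp only [roughCofactors, mem_filter, mem_Icc] at hb
    have hb0 : (0 : ℝ) < b := by exact_mod_cast hb.1.1
    rw [inv_eq_one_div, div_le_div_iff₀ hb0 (by positivity), one_mul]
    exact_mod_cast hb.2.1.le
  have hcard : #(roughCofactors n q) ≤ n := (card_filter_le _ _).trans (by simp)
  calc ∑ b ∈ roughCofactors n q, (b : ℝ)⁻¹ ≤ #(roughCofactors n q) * ((q : ℝ) / n) := by
        simpa using sum_le_card_nsmul _ _ _ inv_le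
    _ ≤ n * ((q : ℝ) / n) := by gcongr
    _ = q := by field_simp

lemma inv_mul_sum_inv_roughCofactors_le {n q : ℕ} (hq : 2 ≤ q) (hqn : q ≤ n) :
    (q : ℝ)⁻¹ * ∑ b ∈ roughCofactors n q, (b : ℝ)⁻¹ ≤
      (1 + 2 * Real.log n) * ((q : ℝ) * Real.log q)⁻¹ := by
  have hlog : 0 < Real.log q := Real.log_pos (by exact_mod_cast hq)
  have hsum : ∑ b ∈ roughCofactors n q, (b : ℝ)⁻¹ ≤ (1 + 2 * Real.log n) / Real.log q := by
    refine (le_div_iff₀ hlog).2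
      (sum_inv_mul_log_le_of_coprime_primorial (by omega) hqn fun b hb => ?_)
    simp only [roughCofactors, mem_filter, mem_Icc] at hb
    exact ⟨hb.1.1, hb.1.2, hb.2.2⟩
  calc (q : ℝ)⁻¹ * ∑ b ∈ roughCofactors n q, (b : ℝ)⁻¹
      ≤ (q : ℝ)⁻¹ * ((1 + 2 * Real.log n) / Real.log q) := by gcongr
    _ = (1 + 2 * Real.log n) * ((q : ℝ) * Real.log q)⁻¹ := by rw [mul_inv]; ring

lemma sum_inv_mul_sum_inv_roughCofactors_le {K : ℕ} (hK : 1 ≤ K) (n : ℕ) :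
    ∑ q ∈ n.primesLE, (q : ℝ)⁻¹ * ∑ b ∈ roughCofactors n q, (b : ℝ)⁻¹ ≤
      2 ^ K + (1 + 2 * Real.log n) * (8 / (K * Real.log 2)) := by
  have hlog : 0 ≤ Real.log n := Real.log_natCast_nonneg n
  rw [← sum_filter_add_sum_filter_not n.primesLE (· < 2 ^ K)]
  refine add_le_add ?_ ?_
  · have hsub : {q ∈ n.primesLE | q < 2 ^ K} ⊆ range (2 ^ K) := fun q hq =>
      mem_range.2 (mem_filter.1 hq).2
    have hcard : #{q ∈ n.primesLE | q < 2 ^ K} ≤ 2 ^ K := by simpa using card_le_card hsub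
    calc ∑ q ∈ n.primesLE with q < 2 ^ K, (q : ℝ)⁻¹ * ∑ b ∈ roughCofactors n q, (b : ℝ)⁻¹
        ≤ ∑ q ∈ n.primesLE with q < 2 ^ K, (1 : ℝ) := by
          refine sum_le_sum fun q _ => (mul_le_mul_of_nonneg_left
            (sum_inv_roughCofactors_le n q) (by positivity)).trans ?_
          exact inv_mul_le_one
      _ ≤ 2 ^ K := by simpa using mod_cast hcard
  · calc ∑ q ∈ n.primesLE with ¬ q < 2 ^ K, (q : ℝ)⁻¹ * ∑ b ∈ roughCofactors n q, (b : ℝ)⁻¹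
        ≤ ∑ q ∈ n.primesLE with ¬ q < 2 ^ K, (1 + 2 * Real.log n) * ((q : ℝ) * Real.log q)⁻¹ := by
          refine sum_le_sum fun q hq => ?_
          rw [mem_filter, Nat.mem_primesLE] at hq
          exact inv_mul_sum_inv_roughCofactors_le hq.1.2.two_le hq.1.1
      _ = (1 + 2 * Real.log n) * ∑ q ∈ n.primesLE with ¬ q < 2 ^ K, ((q : ℝ) * Real.log q)⁻¹ :=
          (mul_sum _ _ _).symm
      _ ≤ (1 + 2 * Real.log n) * (8 / (K * Real.log 2)) := by
          refine mul_le_mul_of_nonneg_left (sum_inv_prime_mul_log_le hK fun q hq => ?_)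
            (by linarith)
          rw [mem_filter, Nat.mem_primesLE, not_lt] at hq
          exact ⟨hq.1.2, hq.2⟩

end ReciprocalSums

/-! ### Sieving integers with at most one divisor in `(n, m)` -/

section Sieve

open Finset

lemma exists_eq_mul_coprime (V : ℕ) {x : ℕ} (hx : 0 < x) :
    ∃ s y, x = s * y ∧ y.Coprime V ∧ ∀ p, p.Prime → p ∣ s → p ∣ V := by
  induction x using Nat.strong_induction_on with
  | _ x ih =>
    by_cases hcop : x.Coprime V
    · exact ⟨1, x, (one_mul x).symm, hcop, fun p hp h => absurd (Nat.dvd_one.1 h) hp.ne_one⟩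
    · obtain ⟨p, hp, ⟨k, rfl⟩, hpV⟩ := Nat.Prime.not_coprime_iff_dvd.1 hcop
      have hk : 0 < k := Nat.pos_of_mul_pos_left hx
      obtain ⟨s, y, rfl, hy, hs⟩ := ih k (lt_mul_left hk hp.one_lt) hk
      refine ⟨p * s, y, (mul_assoc _ _ _).symm, hy, fun r hr hrps => ?_⟩
      rcases (Nat.Prime.dvd_mul hr).1 hrps with hrp | hrs
      · rwa [(Nat.prime_dvd_prime_iff_eq hr hp).1 hrp]
      · exact hs r hr hrs

/-- The proportion `φ(V) / V` of the integers that are coprime to `V`. -/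
noncomputable def coprimeDensity (V : ℕ) : ℝ := V.totient / V

lemma coprimeDensity_pos {V : ℕ} (hV : 0 < V) : 0 < coprimeDensity V := by
  have := Nat.totient_pos.2 hV
  unfold coprimeDensity
  positivity

lemma coprimeDensity_primorial_div_le {p m : ℕ} (hp : p.Prime) (hpm : p ≤ m) :
    coprimeDensity (primorial m / p) ≤ 2 * coprimeDensity (primorial m) := by
  obtain ⟨V, hV⟩ := hp.dvd_primorial_iff.2 hpm
  have hV0 : (0 : ℝ) < V := by
    exact_mod_cast Nat.pos_of_mul_pos_left (hV ▸ primorial_pos m)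
  have hcop : p.Coprime V := Nat.coprime_of_squarefree_mul (hV ▸ squarefree_primorial m)
  have hp2 : (2 : ℝ) ≤ p := by exact_mod_cast hp.two_le
  rw [hV, Nat.mul_div_cancel_left _ hp.pos, coprimeDensity, coprimeDensity, Nat.totient_mul hcop,
    Nat.totient_prime hp]
  push_cast [Nat.cast_sub hp.one_le]
  rw [mul_div_assoc', div_le_div_iff₀ hV0 (by positivity)]
  nlinarith [mul_nonneg (mul_nonneg (Nat.cast_nonneg (α := ℝ) V.totient) hV0.le)
    (sub_nonneg.2 hp2)]

/-- The integers in `[1, M]` of the form `s * y` with `y` coprime to `V`. -/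
def sieved (M s V : ℕ) : Finset ℕ := {x ∈ Icc 1 M | s ∣ x ∧ (x / s).Coprime V}

lemma mem_sieved {M s V x : ℕ} (hs : 0 < s) :
    x ∈ sieved M s V ↔ x ∈ Icc 1 M ∧ ∃ y, x = s * y ∧ y.Coprime V := by
  rw [sieved, mem_filter]
  refine and_congr_right fun _ => ⟨?_, ?_⟩
  · rintro ⟨⟨y, rfl⟩, hy⟩
    exact ⟨y, rfl, by rwa [Nat.mul_div_cancel_left _ hs] at hy⟩
  · rintro ⟨y, rfl, hy⟩
    exact ⟨dvd_mul_right _ _, by rwa [Nat.mul_div_cancel_left _ hs]⟩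

lemma card_filter_coprime_Icc (V : ℕ) : #{y ∈ Icc 1 V | y.Coprime V} = V.totient := by
  rw [← Nat.filter_coprime_Ico_eq_totient V 1, add_comm, Finset.Ico_add_one_right_eq_Icc]
  simp only [Nat.coprime_comm]

lemma card_sieved {M s V : ℕ} (hs : 0 < s) (hV : 0 < V) (h : s * V ∣ M) :
    (#(sieved M s V) : ℝ) = M * coprimeDensity V * (s : ℝ)⁻¹ := by
  obtain ⟨k, rfl⟩ := h
  have hper : Function.Periodic (fun y => y.Coprime V) V := fun y => by simp
  have hcard : #(sieved (s * V * k) s V) = k * V.totient := by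
    rw [sieved, mul_assoc, mul_comm V, card_filter_dvd_Icc_mul hs]
    simp only [Nat.mul_div_cancel_left _ hs]
    rw [card_filter_Icc_mul_of_periodic hper, card_filter_coprime_Icc]
  rw [hcard, coprimeDensity]
  push_cast
  field_simp

lemma exists_minimal_dvd_gt {n e : ℕ} (hne : n < e) :
    ∃ g, g ∣ e ∧ n < g ∧ ∀ r k, 1 < r → g = r * k → k ≤ n := by
  classical
  have hex : ∃ g, g ∣ e ∧ n < g := ⟨e, dvd_rfl, hne⟩
  obtain ⟨hge, hng⟩ := Nat.find_spec hex
  refine ⟨Nat.find hex, hge, hng, fun r k hr hg => ?_⟩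
  by_contra! hnk
  exact Nat.find_min hex (hg ▸ lt_mul_left (by omega) hr)
    ⟨(Dvd.intro_left r hg.symm).trans hge, hnk⟩

lemma exists_prime_mul_roughCofactor_dvd {n e : ℕ} (hn : 1 ≤ n) (hne : n < e)
    (he : ∀ r, r.Prime → r ∣ e → r ≤ n) :
    ∃ q ∈ n.primesLE, ∃ b ∈ roughCofactors n q, q * b ∣ e := by
  obtain ⟨g, hge, hng, hmin⟩ := exists_minimal_dvd_gt hne
  have hq : g.minFac.Prime := Nat.minFac_prime (by omega)
  obtain ⟨b, hb⟩ := Nat.minFac_dvd g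
  have hb0 : 0 < b := Nat.pos_of_ne_zero fun h => by simp only [h, mul_zero] at hb; omega
  refine ⟨g.minFac, Nat.mem_primesLE.2 ⟨he _ hq ((Nat.minFac_dvd g).trans hge), hq⟩, b, ?_,
    hb ▸ hge⟩
  rw [roughCofactors, mem_filter, mem_Icc, ← hb]
  refine ⟨⟨hb0, hmin _ b hq.one_lt hb⟩, hng, Nat.coprime_of_dvd fun r hr hrb hrq => ?_⟩
  have := Nat.minFac_le_of_dvd hr.two_le (hrb.trans (Dvd.intro_left _ hb.symm))
  have := hr.dvd_primorial_iff.1 hrq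
  have := hq.pos
  omega

lemma divCount_eq_zero_of_mem_sieved {n m M s x : ℕ} (hs0 : 0 < s) (hsn : s ≤ n)
    (hx : x ∈ sieved M s (primorial (m - 1))) : divCount n m x = 0 := by
  obtain ⟨-, y, rfl, hy⟩ := (mem_sieved hs0).1 hx
  rw [divCount, card_eq_zero, filter_eq_empty_iff]
  intro d hd hdvd
  obtain ⟨hnd, hdm⟩ := mem_Ioo.1 hd
  have hds : d ∣ s :=
    (coprime_of_lt_of_coprime_primorial (by omega) hdm hy).dvd_of_dvd_mul_right hdvd
  have := Nat.le_of_dvd hs0 hds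
  omega

lemma pairwiseDisjoint_sieved {n m : ℕ} (hnm : n < m) (M : ℕ) :
    (Icc 1 n : Set ℕ).PairwiseDisjoint fun s => sieved M s (primorial (m - 1)) := by
  intro s hs t ht hst
  rw [coe_Icc, Set.mem_Icc] at hs ht
  rw [Function.onFun, disjoint_left]
  intro x hxs hxt
  obtain ⟨-, y, rfl, hy⟩ := (mem_sieved (by omega)).1 hxs
  obtain ⟨-, z, h, hz⟩ := (mem_sieved (by omega)).1 hxt
  exact hst (eq_of_mul_eq_mul_of_coprime_primorial (by omega) (by omega) (by omega) (by omega)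
    hy hz h).1

lemma exists_mem_sieved_of_prime_dvd {n m M x p : ℕ} (hn : 1 ≤ n) (hm : n ^ 2 < m)
    (hx : x ∈ Icc 1 M) (hcount : divCount n m x = 1) (hp : p.Prime) (hnp : n < p) (hpm : p < m)
    (hpx : p ∣ x) :
    ∃ e ∈ Icc 1 n, (e = 1 ∨ m ≤ p * n) ∧ x ∈ sieved M (p * e) (primorial (m - 1) / p) := by
  have huniq : ∀ d, n < d → d < m → d ∣ x → d = p := fun d hnd hdm hdx =>
    (divCount_eq_one_iff.1 hcount).unique ⟨hnd, hdm, hdx⟩ ⟨hnp, hpm, hpx⟩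
  have hpW : p ∣ primorial (m - 1) := hp.dvd_primorial_iff.2 (by omega)
  have hcop : p.Coprime (primorial (m - 1) / p) := Nat.coprime_of_squarefree_mul
    (by rw [Nat.mul_div_cancel' hpW]; exact squarefree_primorial _)
  obtain ⟨e, y, rfl, hy, he⟩ :=
    exists_eq_mul_coprime (primorial (m - 1) / p) (mem_Icc.1 hx).1
  have he0 : 0 < e := Nat.pos_of_mul_pos_right (mem_Icc.1 hx).1
  have hpe : ¬ p ∣ e := fun h => hp.one_lt.ne' (Nat.eq_one_of_dvd_coprimes hcop dvd_rfl (he p hp h))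
  obtain ⟨z, rfl⟩ := ((Nat.Prime.coprime_iff_not_dvd hp).2 hpe).dvd_of_dvd_mul_left hpx
  have hprime : ∀ r, r.Prime → r ∣ e → r ≤ n := by
    intro r hr hre
    by_contra! hnr
    have hrm : r ≤ m - 1 :=
      hr.dvd_primorial_iff.1 ((he r hr hre).trans (Nat.div_dvd_of_dvd hpW))
    exact hpe (huniq r hnr (by omega) (hre.mul_right _) ▸ hre)
  have hen : e ≤ n := by
    by_contra! hne
    obtain ⟨q, hq, b, hb, hqbe⟩ := exists_prime_mul_roughCofactor_dvd hn hne hprime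
    rw [roughCofactors, mem_filter, mem_Icc] at hb
    have hqb : q * b ≤ n ^ 2 := sq n ▸ Nat.mul_le_mul (Nat.le_of_mem_primesLE hq) hb.1.2
    exact hpe (huniq _ hb.2.1 (by omega) (hqbe.mul_right _) ▸ hqbe)
  refine ⟨e, mem_Icc.2 ⟨he0, hen⟩, or_iff_not_imp_left.2 fun he1 => ?_,
    (mem_sieved (Nat.mul_pos hp.pos he0)).2 ⟨hx, z, by ring, hy.coprime_mul_left⟩⟩
  obtain ⟨r, hr, hre⟩ := Nat.exists_prime_and_dvd he1
  have hpr : p * r ≤ p * n := Nat.mul_le_mul_left p (hprime r hr hre)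
  have hlt : p < p * r := lt_mul_right hp.pos hr.one_lt
  by_contra! hpn
  have hdvd : p * r ∣ e * (p * z) := mul_comm p r ▸ Nat.mul_dvd_mul hre (dvd_mul_right p z)
  have := huniq (p * r) (by omega) (by omega) hdvd
  omega

lemma exists_mem_sieved_of_forall_prime_not_dvd {n m M x : ℕ} (hn : 1 ≤ n) (hm : n ^ 3 < m)
    (hx : x ∈ Icc 1 M) (hcount : divCount n m x = 1)
    (hprime : ∀ p, p.Prime → n < p → p < m → ¬ p ∣ x) :
    ∃ q ∈ n.primesLE, ∃ b ∈ roughCofactors n q, x ∈ sieved M (q * b) (primorial (m - 1)) := by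
  obtain ⟨d, ⟨hnd, hdm, hdx⟩, huniq⟩ := divCount_eq_one_iff.1 hcount
  obtain ⟨s, y, rfl, hy, hs⟩ := exists_eq_mul_coprime (primorial (m - 1)) (mem_Icc.1 hx).1
  have hds : d ∣ s :=
    (coprime_of_lt_of_coprime_primorial (by omega) hdm hy).dvd_of_dvd_mul_right hdx
  have hs0 : 0 < s := Nat.pos_of_mul_pos_right (mem_Icc.1 hx).1
  have hs_prime : ∀ r, r.Prime → r ∣ s → r ≤ n := by
    intro r hr hrs
    by_contra! hnr
    have hrm : r ≤ m - 1 := hr.dvd_primorial_iff.1 (hs r hr hrs)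
    exact hprime r hr hnr (by omega) (hrs.mul_right y)
  obtain ⟨q, hq, b, hb, k, rfl⟩ :=
    exists_prime_mul_roughCofactor_dvd hn (hnd.trans_le (Nat.le_of_dvd hs0 hds)) hs_prime
  have hb' := hb
  rw [roughCofactors, mem_filter, mem_Icc] at hb'
  have hqb : q * b ≤ n * n := Nat.mul_le_mul (Nat.le_of_mem_primesLE hq) hb'.1.2
  have hk : k = 1 := by
    by_contra hk1
    obtain ⟨r, hr, hrk⟩ := Nat.exists_prime_and_dvd hk1
    have hdvd : q * b * r ∣ q * b * k := Nat.mul_dvd_mul_left _ hrk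
    have hlt : q * b < q * b * r := lt_mul_right (by omega) hr.one_lt
    have hle : q * b * r ≤ n ^ 3 := by
      calc q * b * r ≤ n * n * n :=
            Nat.mul_le_mul hqb (hs_prime r hr ((dvd_mul_left r _).trans hdvd))
        _ = n ^ 3 := by ring
    have hd1 := huniq (q * b) ⟨hb'.2.1, by omega, (dvd_mul_right _ k).mul_right y⟩
    have hd2 := huniq (q * b * r) ⟨by omega, by omega, hdvd.mul_right y⟩
    omega
  subst hk
  exact ⟨q, hq, b, hb, (mem_sieved (by omega)).2 ⟨hx, y, by rw [mul_one], hy⟩⟩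

lemma filter_divCount_eq_one_subset {n m : ℕ} (hn : 1 ≤ n) (hm : n ^ 3 < m) (M : ℕ) :
    {x ∈ Icc 1 M | divCount n m x = 1} ⊆
      ((m.primesBelow.biUnion fun p => ({1} : Finset ℕ).biUnion fun e =>
          sieved M (p * e) (primorial (m - 1) / p)) ∪
        ({p ∈ m.primesBelow | m ≤ p * n}.biUnion fun p => (Icc 1 n).biUnion fun e =>
          sieved M (p * e) (primorial (m - 1) / p))) ∪
        n.primesLE.biUnion fun q => (roughCofactors n q).biUnion fun b =>
          sieved M (q * b) (primorial (m - 1)) := by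
  intro x hx
  obtain ⟨hxM, hcount⟩ := mem_filter.1 hx
  by_cases hex : ∃ p, p.Prime ∧ n < p ∧ p < m ∧ p ∣ x
  · obtain ⟨p, hp, hnp, hpm, hpx⟩ := hex
    have hpm' : p ∈ m.primesBelow := Nat.mem_primesBelow.2 ⟨hpm, hp⟩
    have hm2 : n ^ 2 < m := (Nat.pow_le_pow_right hn (by norm_num)).trans_lt hm
    obtain ⟨e, he, rfl | hmpn, hxs⟩ :=
      exists_mem_sieved_of_prime_dvd hn hm2 hxM hcount hp hnp hpm hpx
    · exact mem_union_left _ <| mem_union_left _ <| mem_biUnion.2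
        ⟨p, hpm', mem_biUnion.2 ⟨1, mem_singleton_self 1, hxs⟩⟩
    · exact mem_union_left _ <| mem_union_right _ <| mem_biUnion.2
        ⟨p, mem_filter.2 ⟨hpm', hmpn⟩, mem_biUnion.2 ⟨e, he, hxs⟩⟩
  · push Not at hex
    obtain ⟨q, hq, b, hb, hxs⟩ :=
      exists_mem_sieved_of_forall_prime_not_dvd hn hm hxM hcount hex
    exact mem_union_right _ <| mem_biUnion.2 ⟨q, hq, mem_biUnion.2 ⟨b, hb, hxs⟩⟩

lemma card_biUnion_biUnion_le {α β γ : Type*} [DecidableEq γ] {A : Finset α} {B : α → Finset β}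
    {F : α → β → Finset γ} {c : ℝ} {f : α → β → ℝ}
    (h : ∀ a ∈ A, ∀ b ∈ B a, (#(F a b) : ℝ) ≤ c * f a b) :
    (#(A.biUnion fun a => (B a).biUnion fun b => F a b) : ℝ) ≤
      c * ∑ a ∈ A, ∑ b ∈ B a, f a b := by
  rw [mul_sum]
  refine (Nat.cast_le.2 card_biUnion_le).trans ?_
  push_cast
  refine sum_le_sum fun a ha => (Nat.cast_le.2 card_biUnion_le).trans ?_
  push_cast
  rw [mul_sum]
  exact sum_le_sum (h a ha)

lemma le_card_divCount_eq_zero {n m M : ℕ} (hnm : n < m)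
    (hM : ∀ s ∈ Icc 1 n, s * primorial (m - 1) ∣ M) :
    M * coprimeDensity (primorial (m - 1)) * ∑ s ∈ Icc 1 n, (s : ℝ)⁻¹ ≤
      (#{x ∈ Icc 1 M | divCount n m x = 0} : ℝ) := by
  have hsub : ((Icc 1 n).biUnion fun s => sieved M s (primorial (m - 1))) ⊆
      {x ∈ Icc 1 M | divCount n m x = 0} := by
    refine biUnion_subset.2 fun s hs x hx => ?_
    obtain ⟨hs1, hsn⟩ := mem_Icc.1 hs
    exact mem_filter.2 ⟨((mem_sieved hs1).1 hx).1, divCount_eq_zero_of_mem_sieved hs1 hsn hx⟩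
  have hcard := card_le_card hsub
  rw [card_biUnion (pairwiseDisjoint_sieved hnm M)] at hcard
  refine le_of_eq_of_le ?_ (Nat.cast_le.2 hcard)
  rw [Nat.cast_sum, mul_sum]
  exact sum_congr rfl fun s hs =>
    (card_sieved (mem_Icc.1 hs).1 (primorial_pos _) (hM s hs)).symm

lemma card_biUnion_sieved_prime_mul_le {n m M : ℕ}
    (hM : ∀ s ∈ Icc 1 (m * n), s * primorial (m - 1) ∣ M) {P E : Finset ℕ}
    (hP : P ⊆ m.primesBelow) (hE : E ⊆ Icc 1 n) :
    (#(P.biUnion fun p => E.biUnion fun e => sieved M (p * e) (primorial (m - 1) / p)) : ℝ) ≤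
      M * coprimeDensity (primorial (m - 1)) *
        (2 * ((∑ p ∈ P, (p : ℝ)⁻¹) * ∑ e ∈ E, (e : ℝ)⁻¹)) := by
  rw [sum_mul_sum, ← mul_assoc]
  refine card_biUnion_biUnion_le fun p hpP e heE => ?_
  obtain ⟨hpm, hp⟩ := Nat.mem_primesBelow.1 (hP hpP)
  obtain ⟨he1, hen⟩ := mem_Icc.1 (hE heE)
  have hpW : p ∣ primorial (m - 1) := hp.dvd_primorial_iff.2 (by omega)
  have hpe : p * e ∈ Icc 1 (m * n) :=
    mem_Icc.2 ⟨Nat.mul_pos hp.pos he1, Nat.mul_le_mul hpm.le hen⟩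
  rw [card_sieved (mem_Icc.1 hpe).1 (Nat.div_pos (Nat.le_of_dvd (primorial_pos _) hpW) hp.pos)
    ((Nat.mul_dvd_mul_left _ (Nat.div_dvd_of_dvd hpW)).trans (hM _ hpe)), Nat.cast_mul, mul_inv]
  have hdensity := coprimeDensity_primorial_div_le hp (m := m - 1) (by omega)
  calc M * coprimeDensity (primorial (m - 1) / p) * ((p : ℝ)⁻¹ * (e : ℝ)⁻¹)
      ≤ M * (2 * coprimeDensity (primorial (m - 1))) * ((p : ℝ)⁻¹ * (e : ℝ)⁻¹) := by gcongr
    _ = M * coprimeDensity (primorial (m - 1)) * 2 * ((p : ℝ)⁻¹ * (e : ℝ)⁻¹) := by ring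

lemma card_biUnion_sieved_rough_le {n m M : ℕ} (hnm : n < m)
    (hM : ∀ s ∈ Icc 1 (m * n), s * primorial (m - 1) ∣ M) :
    (#(n.primesLE.biUnion fun q => (roughCofactors n q).biUnion fun b =>
        sieved M (q * b) (primorial (m - 1))) : ℝ) ≤
      M * coprimeDensity (primorial (m - 1)) *
        ∑ q ∈ n.primesLE, (q : ℝ)⁻¹ * ∑ b ∈ roughCofactors n q, (b : ℝ)⁻¹ := by
  simp only [mul_sum (s := roughCofactors n _)]
  refine card_biUnion_biUnion_le fun q hq b hb => ?_
  obtain ⟨hqn, hq_prime⟩ := Nat.mem_primesLE.1 hq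
  rw [roughCofactors, mem_filter, mem_Icc] at hb
  have hqb : 0 < q * b := Nat.mul_pos hq_prime.pos hb.1.1
  have hqb_mem : q * b ∈ Icc 1 (m * n) :=
    mem_Icc.2 ⟨hqb, Nat.mul_le_mul (hqn.trans hnm.le) hb.1.2⟩
  rw [card_sieved hqb (primorial_pos _) (hM _ hqb_mem), Nat.cast_mul, mul_inv]

lemma card_divCount_eq_one_le {n m M : ℕ} (hn : 1 ≤ n) (hm : n ^ 3 < m)
    (hM : ∀ s ∈ Icc 1 (m * n), s * primorial (m - 1) ∣ M) :
    (#{x ∈ Icc 1 M | divCount n m x = 1} : ℝ) ≤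
      M * coprimeDensity (primorial (m - 1)) *
        (2 * ∑ p ∈ m.primesBelow, (p : ℝ)⁻¹ +
          2 * ((∑ p ∈ m.primesBelow with m ≤ p * n, (p : ℝ)⁻¹) * ∑ e ∈ Icc 1 n, (e : ℝ)⁻¹) +
          ∑ q ∈ n.primesLE, (q : ℝ)⁻¹ * ∑ b ∈ roughCofactors n q, (b : ℝ)⁻¹) := by
  have hnm : n < m := (Nat.le_self_pow (by norm_num) n).trans_lt hm
  have hprime := card_biUnion_sieved_prime_mul_le hM subset_rfl
    (singleton_subset_iff.2 (mem_Icc.2 ⟨le_rfl, hn⟩))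
  rw [sum_singleton, Nat.cast_one, inv_one, mul_one] at hprime
  have htop := card_biUnion_sieved_prime_mul_le hM (filter_subset (m ≤ · * n) m.primesBelow)
    (subset_refl (Icc 1 n))
  have hrough := card_biUnion_sieved_rough_le hnm hM
  have hcard := (card_le_card (filter_divCount_eq_one_subset hn hm M)).trans
    ((card_union_le _ _).trans (Nat.add_le_add_right (card_union_le _ _) _))
  rw [mul_add, mul_add]
  refine (Nat.cast_le.2 hcard).trans ?_
  push_cast
  exact add_le_add (add_le_add hprime htop) hrough

lemma delta_one_lt_delta_zero_of_sum_lt {n m : ℕ} (hn : 1 ≤ n) (hm : n ^ 3 < m)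
    (h : 2 * ∑ p ∈ m.primesBelow, (p : ℝ)⁻¹ +
        2 * ((∑ p ∈ m.primesBelow with m ≤ p * n, (p : ℝ)⁻¹) * ∑ e ∈ Icc 1 n, (e : ℝ)⁻¹) +
        ∑ q ∈ n.primesLE, (q : ℝ)⁻¹ * ∑ b ∈ roughCofactors n q, (b : ℝ)⁻¹ <
      ∑ s ∈ Icc 1 n, (s : ℝ)⁻¹) :
    delta 1 n m < delta 0 n m := by
  have hnm : n < m := (Nat.le_self_pow (by norm_num) n).trans_lt hm
  set M := (m * n).factorial * primorial (m - 1)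
  have hM0 : 0 < M := Nat.mul_pos (Nat.factorial_pos _) (primorial_pos _)
  have hM : ∀ s ∈ Icc 1 (m * n), s * primorial (m - 1) ∣ M := fun s hs =>
    Nat.mul_dvd_mul_right (Nat.dvd_factorial (mem_Icc.1 hs).1 (mem_Icc.1 hs).2) _
  have hM' : ∀ s ∈ Icc 1 n, s * primorial (m - 1) ∣ M := fun s hs =>
    hM s (Icc_subset_Icc_right (Nat.le_mul_of_pos_left n (by omega)) hs)
  have hL : Llcm n m ∣ M := Llcm_dvd_iff.2 fun d hnd hdm => dvd_of_mul_right_dvd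
    (hM d (mem_Icc.2 ⟨by omega, hdm.le.trans (Nat.le_mul_of_pos_right m (by omega))⟩))
  have hdensity := coprimeDensity_pos (primorial_pos (m - 1))
  rw [delta_lt_delta_iff hL hL hM0, ← Nat.cast_lt (α := ℝ)]
  calc (#{x ∈ Icc 1 M | divCount n m x = 1} : ℝ)
      ≤ M * coprimeDensity (primorial (m - 1)) * _ := card_divCount_eq_one_le hn hm hM
    _ < M * coprimeDensity (primorial (m - 1)) * ∑ s ∈ Icc 1 n, (s : ℝ)⁻¹ := by gcongr
    _ ≤ #{x ∈ Icc 1 M | divCount n m x = 0} := le_card_divCount_eq_zero hnm hM'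

lemma delta_one_lt_delta_zero {n m k K : ℕ} (hn : 1 ≤ n) (hm : n ^ 3 < m) (hK : 1 ≤ K)
    (hk : 1 ≤ k) (hkm : k + Nat.log 2 n + 1 = Nat.log 2 m)
    (h : 8 * (1 + Real.log (Nat.log 2 m)) +
      8 * ((Nat.log 2 n + 2) / k) * (1 + Real.log n) +
      (2 ^ K + (1 + 2 * Real.log n) * (8 / (K * Real.log 2))) < Real.log n) :
    delta 1 n m < delta 0 n m := by
  refine delta_one_lt_delta_zero_of_sum_lt hn hm ?_
  have hharmonic_nonneg : 0 ≤ ∑ e ∈ Icc 1 n, (e : ℝ)⁻¹ := sum_nonneg fun _ _ => by positivity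
  have hlog : Real.log n ≤ Real.log (n + 1) := Real.log_le_log (by positivity) (by linarith)
  have htop : (∑ p ∈ m.primesBelow with m ≤ p * n, (p : ℝ)⁻¹) * ∑ e ∈ Icc 1 n, (e : ℝ)⁻¹ ≤
      4 * ((Nat.log 2 n + 2) / k) * (1 + Real.log n) := by
    rw [← mul_div_assoc]
    exact mul_le_mul (sum_inv_primesBelow_filter_le hk hkm) (sum_inv_Icc_le_one_add_log n)
      hharmonic_nonneg (by positivity)
  linarith [sum_inv_primesBelow_le m, sum_inv_mul_sum_inv_roughCofactors_le hK n,
    log_add_one_le_sum_inv_Icc n]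

end Sieve

/-! ### The zeta function to the right of the imaginary axis -/

section ZetaSeries

open Filter Topology

/-- The terms of the series `(s - 1) ζ(s) = 1 + ∑ k ≥ 1, zetaTerm s k`, which converges for
`0 < re s`: `zetaTerm s k` is `s - 1` times the difference between `k ^ (-s)` and the integral of
`x ^ (-s)` over `[k, k + 1]`. -/
noncomputable def zetaTerm (s : ℂ) (k : ℕ) : ℂ :=
  (s - 1) * (k : ℂ) ^ (-s) + ((k + 1 : ℕ) : ℂ) ^ (1 - s) - (k : ℂ) ^ (1 - s)

lemma norm_ofReal_cpow_neg_sub_le {s : ℂ} (hs : 0 < s.re) {a b : ℝ} (ha : 0 < a) (hab : a ≤ b) :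
    ‖(b : ℂ) ^ (-s) - (a : ℂ) ^ (-s)‖ ≤ ‖s‖ * a ^ (-s.re - 1) * (b - a) := by
  have hs0 : -s ≠ 0 := neg_ne_zero.2 (by rintro rfl; simp at hs)
  have hmvt := (convex_Icc a b).norm_image_sub_le_of_norm_hasDerivWithin_le
    (f := fun y : ℝ => (y : ℂ) ^ (-s)) (f' := fun y : ℝ => -s * (y : ℂ) ^ (-s - 1))
    (C := ‖s‖ * a ^ (-s.re - 1))
    (fun y hy => (hasDerivAt_ofReal_cpow_const (ha.trans_le hy.1).ne' hs0).hasDerivWithinAt)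
    (fun y hy => by
      rw [norm_mul, norm_neg, Complex.norm_cpow_eq_rpow_re_of_pos (ha.trans_le hy.1)]
      gcongr
      exact Real.rpow_le_rpow_of_nonpos ha hy.1 (by simp; linarith))
    (Set.left_mem_Icc.2 hab) (Set.right_mem_Icc.2 hab)
  rwa [Real.norm_of_nonneg (sub_nonneg.2 hab)] at hmvt

lemma norm_zetaTerm_le {s : ℂ} (hs : 0 < s.re) {k : ℕ} (hk : 1 ≤ k) :
    ‖zetaTerm s k‖ ≤ ‖s - 1‖ * ‖s‖ * (k : ℝ) ^ (-s.re - 1) := by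
  have hk0 : (0 : ℝ) < k := by exact_mod_cast hk
  rcases eq_or_ne s 1 with rfl | hs1
  · simp [zetaTerm]
  have hs0 : 1 - s ≠ 0 := sub_ne_zero.2 hs1.symm
  have hmvt := (convex_Icc (k : ℝ) (k + 1)).norm_image_sub_le_of_norm_hasDerivWithin_le
    (f := fun y : ℝ => (y : ℂ) ^ (1 - s) - y * ((1 - s) * (k : ℂ) ^ (-s)))
    (f' := fun y : ℝ => (1 - s) * ((y : ℂ) ^ (-s) - (k : ℂ) ^ (-s)))
    (C := ‖s - 1‖ * (‖s‖ * (k : ℝ) ^ (-s.re - 1)))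
    (fun y hy => by
      have hpow := hasDerivAt_ofReal_cpow_const (hk0.trans_le hy.1).ne' hs0
      have hlin := (hasDerivAt_id (y : ℂ)).comp_ofReal.mul_const ((1 - s) * (k : ℂ) ^ (-s))
      refine ((hpow.sub hlin).congr_deriv ?_).hasDerivWithinAt
      rw [sub_sub_cancel_left]
      ring)
    (fun y hy => by
      rw [norm_mul, norm_sub_rev 1 s]
      gcongr
      refine (norm_ofReal_cpow_neg_sub_le hs hk0 hy.1).trans
        (mul_le_of_le_one_right (by positivity) (by linarith [hy.2])))
    (Set.left_mem_Icc.2 (by linarith)) (Set.right_mem_Icc.2 (by linarith))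
  have hterm : zetaTerm s k = ((k + 1 : ℝ) : ℂ) ^ (1 - s) - (k + 1 : ℝ) * ((1 - s) * (k : ℂ) ^ (-s))
      - (((k : ℝ) : ℂ) ^ (1 - s) - (k : ℝ) * ((1 - s) * (k : ℂ) ^ (-s))) := by
    push_cast [zetaTerm]
    ring
  rw [hterm]
  simpa [mul_assoc] using hmvt

lemma summable_nat_succ_rpow {p : ℝ} (hp : p < -1) : Summable fun k : ℕ => ((k + 1 : ℕ) : ℝ) ^ p :=
  (summable_nat_add_iff 1).2 (Real.summable_nat_rpow.2 hp)

lemma summable_zetaTerm {s : ℂ} (hs : 0 < s.re) : Summable fun k : ℕ => zetaTerm s (k + 1) :=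
  ((summable_nat_succ_rpow (by linarith)).mul_left _).of_norm_bounded
    fun k => norm_zetaTerm_le hs k.succ_pos

lemma sum_range_zetaTerm (s : ℂ) (M : ℕ) : ∑ k ∈ Finset.range M, zetaTerm s (k + 1) =
    (s - 1) * ∑ k ∈ Finset.range M, ((k + 1 : ℕ) : ℂ) ^ (-s) + ((M + 1 : ℕ) : ℂ) ^ (1 - s) - 1 := by
  induction M with
  | zero => simp
  | succ M ih =>
    rw [Finset.sum_range_succ, ih, Finset.sum_range_succ, zetaTerm]
    ring

lemma hasSum_riemannZeta {s : ℂ} (hs : 1 < s.re) :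
    HasSum (fun k : ℕ => ((k + 1 : ℕ) : ℂ) ^ (-s)) (riemannZeta s) := by
  have hterm (k : ℕ) : 1 / ((k + 1 : ℕ) : ℂ) ^ s = ((k + 1 : ℕ) : ℂ) ^ (-s) := by
    rw [Complex.cpow_neg, one_div]
  have hsum := (summable_nat_add_iff 1).2 (Complex.summable_one_div_nat_cpow.2 hs)
  rw [zeta_eq_tsum_one_div_nat_add_one_cpow hs]
  simpa only [hterm, ← Nat.cast_add_one] using hsum.hasSum

lemma tendsto_natCast_cpow_one_sub {s : ℂ} (hs : 1 < s.re) :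
    Tendsto (fun M : ℕ => (M : ℂ) ^ (1 - s)) atTop (𝓝 0) := by
  rw [tendsto_zero_iff_norm_tendsto_zero]
  refine ((tendsto_rpow_neg_atTop (sub_pos.2 hs)).comp tendsto_natCast_atTop_atTop).congr' ?_
  filter_upwards [eventually_gt_atTop 0] with M hM
  simp [Complex.norm_natCast_cpow_of_pos hM]

lemma riemannZeta₁_eq_of_one_lt_re {s : ℂ} (hs : 1 < s.re) :
    riemannZeta₁ s = 1 + ∑' k : ℕ, zetaTerm s (k + 1) := by
  have hs1 : s ≠ 1 := by rintro rfl; simp at hs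
  have hterms := (summable_zetaTerm (zero_lt_one.trans hs)).hasSum.tendsto_sum_nat
  simp_rw [sum_range_zetaTerm] at hterms
  have hlim := (((hasSum_riemannZeta hs).tendsto_sum_nat.const_mul (s - 1)).add
    ((tendsto_natCast_cpow_one_sub hs).comp (tendsto_add_atTop_nat 1))).sub_const 1
  rw [tendsto_nhds_unique hterms hlim, riemannZeta_eq_inv_sub_mul hs1,
    mul_inv_cancel_left₀ (sub_ne_zero.2 hs1)]
  ring

lemma isOpen_setOf_lt_re (a : ℝ) : IsOpen {z : ℂ | a < z.re} :=
  isOpen_lt continuous_const Complex.continuous_re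

lemma differentiable_zetaTerm {k : ℕ} (hk : 1 ≤ k) :
    Differentiable ℂ fun s => zetaTerm s k := by
  have hk0 : (k : ℂ) ≠ 0 := by exact_mod_cast (by omega : k ≠ 0)
  have hk1 : ((k + 1 : ℕ) : ℂ) ≠ 0 := by exact_mod_cast k.succ_ne_zero
  unfold zetaTerm
  fun_prop (disch := first | exact Or.inl hk0 | exact Or.inl hk1)

lemma differentiableOn_tsum_zetaTerm :
    DifferentiableOn ℂ (fun s => ∑' k : ℕ, zetaTerm s (k + 1)) {s | 0 < s.re} := by
  intro z (hz : 0 < z.re)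
  set U : Set ℂ := {w | z.re / 2 < w.re} ∩ Metric.ball 0 (‖z‖ + 1)
  have hUo : IsOpen U := (isOpen_setOf_lt_re _).inter Metric.isOpen_ball
  have hzU : z ∈ U := ⟨half_lt_self hz, by simp⟩
  have hdiff : DifferentiableOn ℂ (fun s => ∑' k : ℕ, zetaTerm s (k + 1)) U := by
    refine Complex.differentiableOn_tsum_of_summable_norm
      (u := fun k : ℕ => (‖z‖ + 2) * (‖z‖ + 1) * ((k + 1 : ℕ) : ℝ) ^ (-(z.re / 2) - 1))
      ((summable_nat_succ_rpow (by linarith)).mul_left _)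
      (fun k => (differentiable_zetaTerm k.succ_pos).differentiableOn) hUo ?_
    rintro k w ⟨hwre : z.re / 2 < w.re, hwball⟩
    have hw : ‖w‖ ≤ ‖z‖ + 1 := (mem_ball_zero_iff.1 hwball).le
    have hw1 : ‖w - 1‖ ≤ ‖z‖ + 2 := (norm_sub_le w 1).trans (by rw [norm_one]; linarith)
    have hk : (1 : ℝ) ≤ ((k + 1 : ℕ) : ℝ) := by exact_mod_cast k.succ_pos
    refine (norm_zetaTerm_le (by linarith) k.succ_pos).trans ?_
    gcongr
  exact (hdiff.differentiableAt (hUo.mem_nhds hzU)).differentiableWithinAt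

lemma riemannZeta₁_eq_one_add_tsum {s : ℂ} (hs : 0 < s.re) :
    riemannZeta₁ s = 1 + ∑' k : ℕ, zetaTerm s (k + 1) := by
  have hopen := isOpen_setOf_lt_re 0
  refine (differentiable_riemannZeta₁.differentiableOn.analyticOnNhd hopen)
    |>.eqOn_of_preconnected_of_eventuallyEq
      (((differentiableOn_const 1).add differentiableOn_tsum_zetaTerm).analyticOnNhd hopen)
      (convex_halfSpace_re_gt 0).isPreconnected (z₀ := 2) (by simp) ?_ hs
  filter_upwards [(isOpen_setOf_lt_re 1).mem_nhds (by simp : (2 : ℂ) ∈ {z : ℂ | 1 < z.re})]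
    with z hz using riemannZeta₁_eq_of_one_lt_re hz

lemma riemannZeta_eq_sum_add_tsum {s : ℂ} (hs : 0 < s.re) (hs1 : s ≠ 1) (M : ℕ) :
    riemannZeta s = ∑ k ∈ Finset.range M, ((k + 1 : ℕ) : ℂ) ^ (-s) +
      (s - 1)⁻¹ * ((M + 1 : ℕ) : ℂ) ^ (1 - s) +
        (s - 1)⁻¹ * ∑' k : ℕ, zetaTerm s (k + M + 1) := by
  have hs1' := sub_ne_zero.2 hs1
  rw [riemannZeta_eq_inv_sub_mul hs1, riemannZeta₁_eq_one_add_tsum hs,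
    ← (summable_zetaTerm hs).sum_add_tsum_nat_add M, sum_range_zetaTerm]
  field_simp
  ring

lemma norm_natCast_cpow_one_sub_le {s : ℂ} {a : ℝ} (hs : 1 - a ≤ s.re) {N : ℕ} (hN : 1 ≤ N) :
    ‖(N : ℂ) ^ (1 - s)‖ ≤ (N : ℝ) ^ a := by
  rw [Complex.norm_natCast_cpow_of_pos hN]
  exact Real.rpow_le_rpow_of_exponent_le (by exact_mod_cast hN) (by simp; linarith)

lemma norm_sum_range_cpow_neg_le {s : ℂ} {a : ℝ} (ha : 0 ≤ a) (hs : 1 - a ≤ s.re) (M : ℕ) :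
    ‖∑ k ∈ Finset.range M, ((k + 1 : ℕ) : ℂ) ^ (-s)‖ ≤ (M : ℝ) ^ a * (1 + Real.log M) := by
  calc ‖∑ k ∈ Finset.range M, ((k + 1 : ℕ) : ℂ) ^ (-s)‖
      ≤ ∑ k ∈ Finset.range M, (M : ℝ) ^ a * ((k + 1 : ℕ) : ℝ)⁻¹ := by
        refine norm_sum_le_of_le _ fun k hk => ?_
        have hk0 : ((k + 1 : ℕ) : ℂ) ≠ 0 := by exact_mod_cast k.succ_ne_zero
        rw [show -s = 1 - s - 1 by ring, Complex.cpow_sub _ _ hk0, Complex.cpow_one, norm_div,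
          Complex.norm_natCast, div_eq_mul_inv]
        gcongr
        exact (norm_natCast_cpow_one_sub_le hs k.succ_pos).trans
          (by gcongr; exact Finset.mem_range.1 hk)
    _ = (M : ℝ) ^ a * (harmonic M : ℚ) := by
        rw [← Finset.mul_sum, harmonic]
        push_cast
        rfl
    _ ≤ (M : ℝ) ^ a * (1 + Real.log M) := by
        gcongr
        exact harmonic_le_one_add_log M

lemma norm_tsum_zetaTerm_le {s : ℂ} (hs : 1 / 2 ≤ s.re) (M : ℕ) :
    ‖∑' k : ℕ, zetaTerm s (k + M + 1)‖ ≤ ‖s - 1‖ * ‖s‖ *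
      (((M + 1 : ℕ) : ℝ) ^ (-(1 / 4) : ℝ) * ∑' k : ℕ, ((k + 1 : ℕ) : ℝ) ^ (-(5 / 4) : ℝ)) := by
  refine tsum_of_norm_bounded (((summable_nat_succ_rpow (by norm_num)).hasSum.mul_left
    (((M + 1 : ℕ) : ℝ) ^ (-(1 / 4) : ℝ))).mul_left (‖s - 1‖ * ‖s‖)) fun k => ?_
  refine (norm_zetaTerm_le (by linarith) (Nat.succ_pos _)).trans ?_
  gcongr
  have hk : (1 : ℝ) ≤ ((k + M + 1 : ℕ) : ℝ) := by exact_mod_cast Nat.succ_pos _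
  calc ((k + M + 1 : ℕ) : ℝ) ^ (-s.re - 1)
      ≤ ((k + M + 1 : ℕ) : ℝ) ^ (-(1 / 4) + -(5 / 4) : ℝ) :=
        Real.rpow_le_rpow_of_exponent_le hk (by linarith)
    _ = ((k + M + 1 : ℕ) : ℝ) ^ (-(1 / 4) : ℝ) * ((k + M + 1 : ℕ) : ℝ) ^ (-(5 / 4) : ℝ) :=
        Real.rpow_add (by linarith) _ _
    _ ≤ ((M + 1 : ℕ) : ℝ) ^ (-(1 / 4) : ℝ) * ((k + 1 : ℕ) : ℝ) ^ (-(5 / 4) : ℝ) := by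
        gcongr ?_ * ?_ <;>
          exact Real.rpow_le_rpow_of_nonpos (by positivity) (by push_cast; simp) (by norm_num)

end ZetaSeries

/-! ### Bounds for the zeta function near the line `re s = 1` -/

section ZetaBounds

/-- `ZetaLogBound C` says that `ζ(s)` is at most `C * L` where `1 - 1 / L ≤ re s ≤ 3` and
`1 / 2 ≤ |im s| ≤ 3 * exp L`. The real number `L ≥ 2` is an upper bound for `log |im s|`, up to a
constant, and the range of `im s` is wide enough to contain `2 * im z` and discs about `z` whenever
`1 ≤ |im z| ≤ exp L`. -/
def ZetaLogBound (C : ℝ) : Prop :=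
  ∀ ⦃L : ℝ⦄, 2 ≤ L → ∀ ⦃s : ℂ⦄, 1 - 1 / L ≤ s.re → s.re ≤ 3 → 1 / 2 ≤ |s.im| →
    |s.im| ≤ 3 * Real.exp L → ‖riemannZeta s‖ ≤ C * L

lemma ne_one_of_abs_im_pos {s : ℂ} (hs : 0 < |s.im|) : s ≠ 1 := by
  rintro rfl
  simp at hs

lemma floor_exp_rpow_le {a x : ℝ} (ha : 0 ≤ a) :
    (⌊Real.exp x⌋₊ : ℝ) ^ a ≤ Real.exp (x * a) := by
  rw [Real.exp_mul]
  exact Real.rpow_le_rpow (Nat.cast_nonneg _) (Nat.floor_le (Real.exp_pos x).le) ha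

lemma log_floor_exp_le {x : ℝ} (hx : 0 ≤ x) : Real.log ⌊Real.exp x⌋₊ ≤ x := by
  have hpos : 0 < ⌊Real.exp x⌋₊ := Nat.floor_pos.2 (Real.one_le_exp hx)
  rw [Real.log_le_iff_le_exp (by exact_mod_cast hpos)]
  exact Nat.floor_le (Real.exp_pos x).le

lemma norm_inv_sub_one_mul_floor_cpow_le {L : ℝ} (hL : 2 ≤ L) {s : ℂ} (hs : 1 - 1 / L ≤ s.re)
    (him : 1 / 2 ≤ |s.im|) :
    ‖(s - 1)⁻¹ * ((⌊Real.exp (8 * L)⌋₊ + 1 : ℕ) : ℂ) ^ (1 - s)‖ ≤ 4 * Real.exp 8 := by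
  have hs1 : ‖(s - 1)⁻¹‖ ≤ 2 := by
    have := Complex.abs_im_le_norm (s - 1)
    rw [Complex.sub_im, Complex.one_im, sub_zero] at this
    rw [norm_inv]
    exact inv_le_of_inv_le₀ (by norm_num) (by linarith)
  have hinvL : 1 / L ≤ 1 := (div_le_one (by linarith)).2 (by linarith)
  have hpow : ((⌊Real.exp (8 * L)⌋₊ + 1 : ℕ) : ℝ) ^ (1 / L) ≤ 2 * Real.exp 8 := by
    have hN : ((⌊Real.exp (8 * L)⌋₊ + 1 : ℕ) : ℝ) ≤ 2 * Real.exp (8 * L) := by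
      have := Nat.floor_le (Real.exp_pos (8 * L)).le
      have := Real.one_le_exp (show 0 ≤ 8 * L by linarith)
      push_cast
      linarith
    calc ((⌊Real.exp (8 * L)⌋₊ + 1 : ℕ) : ℝ) ^ (1 / L)
        ≤ (2 * Real.exp (8 * L)) ^ (1 / L) := by gcongr
      _ = 2 ^ (1 / L) * Real.exp 8 := by
        rw [Real.mul_rpow two_pos.le (Real.exp_pos _).le, ← Real.exp_mul]
        field_simp
      _ ≤ 2 * Real.exp 8 := by
        gcongr
        exact (Real.rpow_le_rpow_of_exponent_le one_le_two hinvL).trans_eq (Real.rpow_one 2)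
  calc ‖(s - 1)⁻¹ * ((⌊Real.exp (8 * L)⌋₊ + 1 : ℕ) : ℂ) ^ (1 - s)‖
      ≤ 2 * (2 * Real.exp 8) := by
        rw [norm_mul]
        gcongr
        exact (norm_natCast_cpow_one_sub_le hs (Nat.succ_pos _)).trans hpow
    _ = 4 * Real.exp 8 := by ring

lemma norm_mul_floor_rpow_le {L : ℝ} (hL : 2 ≤ L) {s : ℂ} (hre : |s.re| ≤ 3)
    (him : |s.im| ≤ 3 * Real.exp L) :
    ‖s‖ * ((⌊Real.exp (8 * L)⌋₊ + 1 : ℕ) : ℝ) ^ (-(1 / 4) : ℝ) ≤ 6 := by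
  have hs : ‖s‖ ≤ 6 * Real.exp L := by
    have := Complex.norm_le_abs_re_add_abs_im s
    have := Real.one_le_exp (show 0 ≤ L by linarith)
    linarith
  have hpow : ((⌊Real.exp (8 * L)⌋₊ + 1 : ℕ) : ℝ) ^ (-(1 / 4) : ℝ) ≤ Real.exp (-2 * L) := by
    calc ((⌊Real.exp (8 * L)⌋₊ + 1 : ℕ) : ℝ) ^ (-(1 / 4) : ℝ)
        ≤ Real.exp (8 * L) ^ (-(1 / 4) : ℝ) := by
          refine Real.rpow_le_rpow_of_nonpos (Real.exp_pos _) ?_ (by norm_num)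
          exact_mod_cast (Nat.lt_floor_add_one _).le
      _ = Real.exp (-2 * L) := by
          rw [← Real.exp_mul]
          ring_nf
  calc ‖s‖ * ((⌊Real.exp (8 * L)⌋₊ + 1 : ℕ) : ℝ) ^ (-(1 / 4) : ℝ)
      ≤ 6 * Real.exp L * Real.exp (-2 * L) := by gcongr
    _ = 6 * Real.exp (-L) := by rw [mul_assoc, ← Real.exp_add]; ring_nf
    _ ≤ 6 := by linarith [Real.exp_le_one_iff.2 (show -L ≤ 0 by linarith)]

lemma exists_zetaLogBound : ∃ C, 1 ≤ C ∧ ZetaLogBound C := by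
  set K : ℝ := ∑' k : ℕ, ((k + 1 : ℕ) : ℝ) ^ (-(5 / 4) : ℝ)
  have hK : 0 ≤ K := tsum_nonneg fun k => by positivity
  have he : 1 ≤ Real.exp 8 := Real.one_le_exp (by norm_num)
  refine ⟨20 * Real.exp 8 + 6 * K, by linarith, fun L hL s hre hre3 him him3 => ?_⟩
  have hinvL : 1 / L ≤ 1 / 2 := one_div_le_one_div_of_le two_pos hL
  have hs1 : s ≠ 1 := ne_one_of_abs_im_pos (by linarith)
  set M := ⌊Real.exp (8 * L)⌋₊
  have hsum : ‖∑ k ∈ Finset.range M, ((k + 1 : ℕ) : ℂ) ^ (-s)‖ ≤ Real.exp 8 * (1 + 8 * L) := by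
    refine (norm_sum_range_cpow_neg_le (by positivity) hre M).trans ?_
    have hexp : 8 * L * (1 / L) = 8 := by field_simp
    gcongr
    · exact (floor_exp_rpow_le (by positivity)).trans_eq (by rw [hexp])
    · exact log_floor_exp_le (by linarith)
  have htail : ‖(s - 1)⁻¹ * ∑' k : ℕ, zetaTerm s (k + M + 1)‖ ≤ 6 * K := by
    have hpos : 0 < ‖s - 1‖ := norm_pos_iff.2 (sub_ne_zero.2 hs1)
    rw [norm_mul, norm_inv, inv_mul_le_iff₀ hpos]
    refine (norm_tsum_zetaTerm_le (by linarith) M).trans ?_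
    rw [mul_assoc, ← mul_assoc ‖s‖]
    gcongr
    exact norm_mul_floor_rpow_le hL (abs_le.2 ⟨by linarith, hre3⟩) him3
  rw [riemannZeta_eq_sum_add_tsum (by linarith) hs1 M]
  calc _ ≤ Real.exp 8 * (1 + 8 * L) + 4 * Real.exp 8 + 6 * K :=
        norm_add₃_le.trans
          (add_le_add_three hsum (norm_inv_sub_one_mul_floor_cpow_le hL hre him) htail)
    _ ≤ (20 * Real.exp 8 + 6 * K) * L := by nlinarith

lemma abs_re_sub_le_and_abs_im_sub_le {s z : ℂ} {r : ℝ} (hz : z ∈ Metric.closedBall s r) :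
    |z.re - s.re| ≤ r ∧ |z.im - s.im| ≤ r := by
  rw [mem_closedBall_iff_norm] at hz
  exact ⟨(Complex.abs_re_le_norm (z - s)).trans hz, (Complex.abs_im_le_norm (z - s)).trans hz⟩

lemma ZetaLogBound.norm_deriv_le {C : ℝ} (hC : ZetaLogBound C) {L : ℝ} (hL : 2 ≤ L) {s : ℂ}
    (hre : 1 - 1 / (2 * L) ≤ s.re) (hre2 : s.re ≤ 2) (him : 1 ≤ |s.im|)
    (himL : |s.im| ≤ Real.exp L) : ‖deriv riemannZeta s‖ ≤ 2 * C * L ^ 2 := by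
  have hr : 0 < 1 / (2 * L) := by positivity
  have hr4 : 1 / (2 * L) ≤ 1 / 4 := one_div_le_one_div_of_le (by norm_num) (by linarith)
  have h2r : 1 / L = 1 / (2 * L) + 1 / (2 * L) := by field_simp; norm_num
  have himball {z : ℂ} (hz : z ∈ Metric.closedBall s (1 / (2 * L))) :
      1 / 2 ≤ |z.im| ∧ |z.im| ≤ 3 * Real.exp L := by
    have := abs_le.1 ((abs_abs_sub_abs_le z.im s.im).trans (abs_re_sub_le_and_abs_im_sub_le hz).2)
    constructor <;> linarith [Real.add_one_le_exp L]
  have hcauchy := Complex.norm_deriv_le_of_forall_mem_sphere_norm_le (f := riemannZeta) (c := s)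
    (C := C * L) hr
    (DifferentiableOn.diffContOnCl_ball (U := {1}ᶜ)
      (fun z hz => (differentiableAt_riemannZeta hz).differentiableWithinAt)
      fun z hz => ne_one_of_abs_im_pos (by linarith [(himball hz).1]))
    (fun z hz => by
      have hz' := Metric.sphere_subset_closedBall hz
      have hzre := abs_le.1 (abs_re_sub_le_and_abs_im_sub_le hz').1
      exact hC hL (by linarith) (by linarith) (himball hz').1 (himball hz').2)
  exact hcauchy.trans_eq (by field_simp)

lemma exists_norm_riemannZeta_one_add_le : ∃ D, 1 ≤ D ∧ ∀ x : ℝ, 0 < x → x ≤ 1 →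
    ‖riemannZeta (1 + x)‖ ≤ D / x := by
  have hcont : Continuous fun x : ℝ => riemannZeta₁ (1 + x) :=
    differentiable_riemannZeta₁.continuous.comp (by fun_prop)
  obtain ⟨D, hD⟩ := (isCompact_Icc (a := (0 : ℝ)) (b := 1)).exists_bound_of_continuousOn
    hcont.continuousOn
  refine ⟨max D 1, le_max_right _ _, fun x hx hx1 => ?_⟩
  rw [riemannZeta_eq_inv_sub_mul (by simpa using hx.ne'), norm_mul, add_sub_cancel_left, norm_inv,
    Complex.norm_real, Real.norm_of_nonneg hx.le, inv_mul_eq_div]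
  gcongr
  exact (hD x ⟨hx.le, hx1⟩).trans (le_max_left _ _)

lemma one_le_norm_riemannZeta_three_four_one {x : ℝ} (hx : 0 < x) (y : ℝ) :
    1 ≤ ‖riemannZeta (1 + x)‖ ^ 3 * ‖riemannZeta (1 + x + Complex.I * y)‖ ^ 4 *
      ‖riemannZeta (1 + x + 2 * Complex.I * y)‖ := by
  simpa [DirichletCharacter.LFunctionTrivChar, DirichletCharacter.LFunction_modOne_eq] using
    DirichletCharacter.norm_LFunction_product_ge_one (N := 1) 1 hx y

lemma ZetaLogBound.pow_three_le_mul_norm_pow_four {C D : ℝ} (hC : ZetaLogBound C)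
    (hD : ∀ x : ℝ, 0 < x → x ≤ 1 → ‖riemannZeta (1 + x)‖ ≤ D / x) {L : ℝ} (hL : 2 ≤ L) {x y : ℝ}
    (hx : 0 < x) (hx1 : x ≤ 1) (hy : 1 ≤ |y|) (hyL : |y| ≤ Real.exp L) :
    x ^ 3 ≤ D ^ 3 * C * L * ‖riemannZeta (1 + x + y * Complex.I)‖ ^ 4 := by
  have hdouble : ‖riemannZeta (1 + x + 2 * Complex.I * y)‖ ≤ C * L := by
    have : 0 < L⁻¹ := by positivity
    refine hC hL ?_ ?_ ?_ ?_ <;> simp [abs_mul] <;> linarith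
  have hx3 := pow_pos hx 3
  have h341 : 1 ≤ (D / x) ^ 3 * ‖riemannZeta (1 + x + y * Complex.I)‖ ^ 4 * (C * L) := by
    rw [mul_comm (y : ℂ)]
    have hD0 := (norm_nonneg _).trans (hD x hx hx1)
    exact (one_le_norm_riemannZeta_three_four_one hx y).trans (by gcongr; exact hD x hx hx1)
  calc x ^ 3 ≤ x ^ 3 * ((D / x) ^ 3 * ‖riemannZeta (1 + x + y * Complex.I)‖ ^ 4 * (C * L)) :=
        le_mul_of_one_le_right hx3.le h341
    _ = D ^ 3 * C * L * ‖riemannZeta (1 + x + y * Complex.I)‖ ^ 4 := by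
        field_simp

end ZetaBounds

section ZetaLowerBound

variable {C D κ L : ℝ}

lemma ZetaLogBound.norm_riemannZeta_sub_le (hC : ZetaLogBound C) (hL : 2 ≤ L) {σ τ t : ℝ}
    (hσ : 1 - 1 / (2 * L) ≤ σ) (hστ : σ ≤ τ) (hτ : τ ≤ 2) (ht : 1 ≤ |t|) (htL : |t| ≤ Real.exp L) :
    ‖riemannZeta (τ + t * Complex.I) - riemannZeta (σ + t * Complex.I)‖ ≤
      2 * C * L ^ 2 * (τ - σ) := by
  have hmvt := (convex_Icc σ τ).norm_image_sub_le_of_norm_hasDerivWithin_le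
    (f := fun x : ℝ => riemannZeta (x + t * Complex.I))
    (f' := fun x : ℝ => deriv riemannZeta (x + t * Complex.I)) (C := 2 * C * L ^ 2)
    (fun x _ => by
      have hne : (x + t * Complex.I : ℂ) ≠ 1 :=
        ne_one_of_abs_im_pos (by simpa using zero_lt_one.trans_le ht)
      exact ((differentiableAt_riemannZeta hne).hasDerivAt.comp_add_const
        (x : ℂ) (t * Complex.I)).comp_ofReal.hasDerivWithinAt)
    (fun x hx => hC.norm_deriv_le hL (by simpa using hσ.trans hx.1) (by simpa using hx.2.trans hτ)
      (by simpa using ht) (by simpa using htL))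
    (Set.left_mem_Icc.2 hστ) (Set.right_mem_Icc.2 hστ)
  rwa [Real.norm_of_nonneg (sub_nonneg.2 hστ)] at hmvt

lemma ZetaLogBound.le_norm_riemannZeta_one_add (hC : ZetaLogBound C) (hC0 : 0 < C) (hD0 : 0 < D)
    (hD : ∀ x : ℝ, 0 < x → x ≤ 1 → ‖riemannZeta (1 + x)‖ ≤ D / x) (hκ0 : 0 < κ)
    (hκ : D ^ 3 * C * (16 * C) ^ 4 * κ = 1) (hL : 2 ≤ L) {x t : ℝ} (hx : κ / L ^ 9 ≤ x)
    (hx1 : x ≤ 1) (ht : 1 ≤ |t|) (htL : |t| ≤ Real.exp L) :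
    16 * C * κ / L ^ 7 ≤ ‖riemannZeta (1 + x + t * Complex.I)‖ := by
  have ha : 0 < κ / L ^ 9 := by positivity
  refine le_of_pow_le_pow_left₀ four_ne_zero (norm_nonneg _) ?_
  refine le_of_mul_le_mul_left ?_ (by positivity : 0 < D ^ 3 * C * L)
  calc D ^ 3 * C * L * (16 * C * κ / L ^ 7) ^ 4
      = (D ^ 3 * C * (16 * C) ^ 4 * κ) * (κ ^ 3 * L / L ^ 28) := by ring
    _ = (κ / L ^ 9) ^ 3 := by rw [hκ]; field_simp
    _ ≤ x ^ 3 := by gcongr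
    _ ≤ D ^ 3 * C * L * ‖riemannZeta (1 + x + t * Complex.I)‖ ^ 4 :=
      hC.pow_three_le_mul_norm_pow_four hD hL (ha.trans_le hx) hx1 ht htL

lemma div_pow_nine_le (hκ : κ ≤ 1 / 4) (hL : 2 ≤ L) : κ / L ^ 9 ≤ 1 / (2 * L) := by
  have hL8 : 1 ≤ L ^ 8 := one_le_pow₀ (by linarith)
  rw [div_le_div_iff₀ (by positivity) (by positivity)]
  nlinarith

lemma ZetaLogBound.le_norm_riemannZeta (hC : ZetaLogBound C) (hC0 : 0 < C) (hD0 : 0 < D)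
    (hD : ∀ x : ℝ, 0 < x → x ≤ 1 → ‖riemannZeta (1 + x)‖ ≤ D / x) (hκ0 : 0 < κ)
    (hκ : D ^ 3 * C * (16 * C) ^ 4 * κ = 1) (hκ4 : κ ≤ 1 / 4) (hL : 2 ≤ L) {s : ℂ}
    (hre : 1 - κ / L ^ 9 ≤ s.re) (hre2 : s.re ≤ 2) (him : 1 ≤ |s.im|)
    (himL : |s.im| ≤ Real.exp L) : 12 * C * κ / L ^ 7 ≤ ‖riemannZeta s‖ := by
  set a := κ / L ^ 9 with ha
  have ha2 : a ≤ 1 / (2 * L) := div_pow_nine_le hκ4 hL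
  have ha4 : a ≤ 1 / 4 := ha2.trans (one_div_le_one_div_of_le (by norm_num) (by linarith))
  have hs : (s.re : ℂ) + s.im * Complex.I = s := Complex.re_add_im s
  have hright {x : ℝ} (hx : a ≤ x) (hx1 : x ≤ 1) :=
    hC.le_norm_riemannZeta_one_add hC0 hD0 hD hκ0 hκ hL hx hx1 him himL
  rcases le_total (1 + a) s.re with h | h
  · calc 12 * C * κ / L ^ 7 ≤ 16 * C * κ / L ^ 7 := by gcongr; norm_num
      _ ≤ ‖riemannZeta (1 + (s.re - 1 : ℝ) + s.im * Complex.I)‖ :=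
        hright (by linarith) (by linarith)
      _ = ‖riemannZeta s‖ := by
        rw [Complex.ofReal_sub, Complex.ofReal_one, add_sub_cancel, hs]
  · have hvar := hC.norm_riemannZeta_sub_le hL (by linarith) h (by linarith) him himL
    rw [hs, Complex.ofReal_add, Complex.ofReal_one] at hvar
    calc 12 * C * κ / L ^ 7 = 16 * C * κ / L ^ 7 - 2 * C * L ^ 2 * (2 * a) := by
          rw [ha]
          field_simp
          norm_num
      _ ≤ ‖riemannZeta (1 + a + s.im * Complex.I)‖ - 2 * C * L ^ 2 * (1 + a - s.re) := by
          gcongr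
          · exact hright le_rfl (by linarith)
          · linarith
      _ ≤ ‖riemannZeta s‖ := by
          linarith [norm_sub_norm_le (riemannZeta (1 + a + s.im * Complex.I)) (riemannZeta s)]

lemma exists_riemannZeta_bounds : ∃ κ B : ℝ, 0 < κ ∧ κ ≤ 1 / 4 ∧ 0 < B ∧ ∀ ⦃L : ℝ⦄, 2 ≤ L →
    ∀ ⦃s : ℂ⦄, 1 - κ / L ^ 9 ≤ s.re → s.re ≤ 2 → 1 ≤ |s.im| → |s.im| ≤ Real.exp L →
      riemannZeta s ≠ 0 ∧ ‖riemannZeta s‖ ≤ B * L ^ 9 ∧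
        ‖deriv riemannZeta s / riemannZeta s‖ ≤ B * L ^ 9 := by
  obtain ⟨C, hC1, hC⟩ := exists_zetaLogBound
  obtain ⟨D, hD1, hD⟩ := exists_norm_riemannZeta_one_add_le
  have hκ : D ^ 3 * C * (16 * C) ^ 4 * (D ^ 3 * C * (16 * C) ^ 4)⁻¹ = 1 :=
    mul_inv_cancel₀ (by positivity)
  have hden : 4 ≤ D ^ 3 * C * (16 * C) ^ 4 := by
    have := one_le_mul_of_one_le_of_one_le (one_le_pow₀ hD1 : 1 ≤ D ^ 3) hC1
    have : 1 ≤ C ^ 4 := one_le_pow₀ hC1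
    nlinarith
  set κ := (D ^ 3 * C * (16 * C) ^ 4)⁻¹
  have hκ0 : 0 < κ := by positivity
  have hκ4 : κ ≤ 1 / 4 := by rw [one_div]; exact inv_anti₀ (by norm_num) hden
  refine ⟨κ, C + 1 / κ, hκ0, hκ4, by positivity, fun L hL s hre hre2 him himL => ?_⟩
  have hlow := hC.le_norm_riemannZeta (by linarith) (by linarith) hD hκ0 hκ hκ4 hL hre hre2 him himL
  have hpos : 0 < 12 * C * κ / L ^ 7 := by positivity
  have hre' : 1 - 1 / (2 * L) ≤ s.re := by linarith [div_pow_nine_le hκ4 hL]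
  refine ⟨norm_pos_iff.1 (hpos.trans_le hlow), ?_, ?_⟩
  · have hLL : 1 / (2 * L) ≤ 1 / L := one_div_le_one_div_of_le (by linarith) (by linarith)
    calc ‖riemannZeta s‖ ≤ C * L :=
          hC hL (by linarith) (by linarith) (by linarith) (by linarith [Real.exp_pos L])
      _ ≤ (C + 1 / κ) * L ^ 9 := by
          gcongr
          · linarith [one_div_pos.2 hκ0]
          · exact le_self_pow₀ (by linarith) (by norm_num)
  · rw [norm_div, div_le_iff₀ (hpos.trans_le hlow)]
    calc ‖deriv riemannZeta s‖ ≤ 2 * C * L ^ 2 := hC.norm_deriv_le hL hre' hre2 him himL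
      _ ≤ 12 * C * L ^ 2 := by gcongr; norm_num
      _ = 1 / κ * L ^ 9 * (12 * C * κ / L ^ 7) := by field_simp
      _ ≤ (C + 1 / κ) * L ^ 9 * ‖riemannZeta s‖ := by gcongr; linarith

end ZetaLowerBound

section ZetaDiff

/-- The function `-ζ'/ζ - ζ`, which is holomorphic at `s = 1`, where the poles of its two parts
cancel; to include `s = 1` it is defined through the entire functions `riemannZeta₁` and
`riemannZeta₀`, equal to `(s - 1) ζ(s)` and `ζ(s) - 1 / (s - 1)` elsewhere. -/
noncomputable def zetaDiff (s : ℂ) : ℂ :=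
  -(deriv riemannZeta₁ s / riemannZeta₁ s) - riemannZeta₀ s

lemma riemannZeta₁_ne_zero {s : ℂ} (hs : riemannZeta s ≠ 0) : riemannZeta₁ s ≠ 0 := by
  rcases eq_or_ne s 1 with rfl | hs1
  · simp
  · rw [riemannZeta_eq_inv_sub_mul hs1] at hs
    exact right_ne_zero_of_mul hs

lemma zetaDiff_eq {s : ℂ} (hs1 : s ≠ 1) (hs : riemannZeta s ≠ 0) :
    zetaDiff s = -(deriv riemannZeta s / riemannZeta s) - riemannZeta s := by
  have hs1' := sub_ne_zero.2 hs1
  have hs' := riemannZeta₁_ne_zero hs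
  have hlogDeriv : deriv riemannZeta s / riemannZeta s =
      -(s - 1)⁻¹ + deriv riemannZeta₁ s / riemannZeta₁ s := by
    rw [deriv_riemannZeta_eq_neg_inv_sub_sq_mul_add hs1, riemannZeta_eq_inv_sub_mul hs1]
    field_simp
  rw [zetaDiff, hlogDeriv, riemannZeta_eq_inv_sub_add hs1]
  ring

lemma differentiableAt_zetaDiff {s : ℂ} (hs : riemannZeta₁ s ≠ 0) :
    DifferentiableAt ℂ zetaDiff s :=
  ((differentiable_riemannZeta₁.deriv s).div (differentiable_riemannZeta₁ s) hs).neg.sub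
    (differentiable_riemannZeta₀ s)

lemma exists_norm_zetaDiff_le_of_abs_im_le_one : ∃ η B : ℝ, 0 < η ∧ ∀ s : ℂ, 1 - η ≤ s.re →
    s.re ≤ 2 → |s.im| ≤ 1 → riemannZeta₁ s ≠ 0 ∧ ‖zetaDiff s‖ ≤ B := by
  set K : Set ℂ := Set.Icc 1 2 ×ℂ Set.Icc (-1) 1
  have hK : IsCompact K := isCompact_Icc.reProdIm isCompact_Icc
  have hU : IsOpen {s : ℂ | riemannZeta₁ s ≠ 0} :=
    isOpen_ne_fun differentiable_riemannZeta₁.continuous continuous_const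
  obtain ⟨η, hη, hηU⟩ := hK.exists_cthickening_subset_open hU
    fun s hs => riemannZeta₁_ne_zero (riemannZeta_ne_zero_of_one_le_re hs.1.1)
  have hcont : ContinuousOn zetaDiff (Metric.cthickening η K) := fun s hs =>
    (differentiableAt_zetaDiff (hηU hs)).continuousAt.continuousWithinAt
  obtain ⟨B, hB⟩ := hK.cthickening.exists_bound_of_continuousOn hcont
  refine ⟨η, B, hη, fun s hre hre2 him => ?_⟩
  have hs : s ∈ Metric.cthickening η K := by
    have him' : s.im = (⟨max s.re 1, s.im⟩ : ℂ).im := rfl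
    refine Metric.mem_cthickening_of_dist_le s ⟨max s.re 1, s.im⟩ η K
      ⟨⟨le_max_right _ _, max_le hre2 one_le_two⟩, abs_le.1 him⟩ ?_
    rw [Complex.dist_of_im_eq him', Real.dist_eq, abs_le]
    rcases max_cases s.re 1 with h | h <;> rw [h.1] <;> constructor <;> linarith
  exact ⟨hηU hs, hB s hs⟩

lemma exists_norm_zetaDiff_le : ∃ κ B : ℝ, 0 < κ ∧ κ ≤ 1 / 4 ∧ 0 < B ∧ ∀ ⦃L : ℝ⦄, 2 ≤ L →
    ∀ ⦃s : ℂ⦄, 1 - κ / L ^ 9 ≤ s.re → s.re ≤ 2 → |s.im| ≤ Real.exp L →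
      riemannZeta₁ s ≠ 0 ∧ ‖zetaDiff s‖ ≤ B * L ^ 9 := by
  obtain ⟨η, B, hη, hB⟩ := exists_norm_zetaDiff_le_of_abs_im_le_one
  obtain ⟨κ, C, hκ, hκ4, hC0, hC⟩ := exists_riemannZeta_bounds
  refine ⟨min κ η, |B| + 2 * C, lt_min hκ hη, (min_le_left _ _).trans hκ4, by positivity,
    fun L hL s hre hre2 himL => ?_⟩
  have hL9 : 1 ≤ L ^ 9 := one_le_pow₀ (by linarith)
  rcases le_or_gt |s.im| 1 with him | him
  · have hη' : min κ η / L ^ 9 ≤ η :=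
      (div_le_self (lt_min hκ hη).le hL9).trans (min_le_right _ _)
    obtain ⟨hne, hle⟩ := hB s (by linarith) hre2 him
    exact ⟨hne, by nlinarith [le_abs_self B, abs_nonneg B]⟩
  · have hκ' : min κ η / L ^ 9 ≤ κ / L ^ 9 := by gcongr; exact min_le_left _ _
    obtain ⟨hne, hle, hle'⟩ := hC hL (by linarith) hre2 him.le himL
    refine ⟨riemannZeta₁_ne_zero hne, ?_⟩
    rw [zetaDiff_eq (ne_one_of_abs_im_pos (by linarith)) hne]
    calc ‖-(deriv riemannZeta s / riemannZeta s) - riemannZeta s‖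
        ≤ C * L ^ 9 + C * L ^ 9 := norm_sub_le_of_le (by rwa [norm_neg]) hle
      _ ≤ (|B| + 2 * C) * L ^ 9 := by nlinarith [abs_nonneg B]

end ZetaDiff

/-! ### A Gaussian-smoothed prime counting formula -/

section GaussianSum

open ArithmeticFunction MeasureTheory

/-- The `n`-th coefficient `Λ(n) - 1` of the Dirichlet series of `zetaDiff`, and `0` for `n = 0`. -/
noncomputable def zetaDiffCoeff (n : ℕ) : ℝ := vonMangoldt n - (zeta n : ℝ)

/-- The Gaussian weight attached to `n` with `v = u - log n`, multiplied by `(exp u / n) ^ 2`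
because the Dirichlet series of `zetaDiff` is integrated along the line `re s = 2`. -/
noncomputable def gaussWeight (b v : ℝ) : ℝ := Real.exp (2 * v - v ^ 2 / (4 * b))

/-- The integrand, on the line `re s = 2`, of the integral representing the sum of the
`zetaDiffCoeff n` with weights `gaussWeight b (u - log n)`. -/
noncomputable def zetaDiffGauss (b u : ℝ) (s : ℂ) : ℂ :=
  zetaDiff s * Complex.exp (b * (s - 2) ^ 2 + u * s)

lemma lseriesHasSum_zetaDiffCoeff {s : ℂ} (hs : 1 < s.re) :
    LSeriesHasSum (fun n => (zetaDiffCoeff n : ℂ)) s (zetaDiff s) := by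
  have hs1 : s ≠ 1 := by rintro rfl; simp at hs
  have hΛ := (LSeriesSummable_vonMangoldt hs).LSeriesHasSum
  rw [LSeries_vonMangoldt_eq_deriv_riemannZeta_div hs, neg_div] at hΛ
  rw [zetaDiff_eq hs1 (riemannZeta_ne_zero_of_one_le_re hs.le)]
  convert hΛ.sub (LSeriesHasSum_zeta hs) using 1
  ext n
  simp only [zetaDiffCoeff, Complex.ofReal_sub, Complex.ofReal_natCast, Pi.sub_apply]

lemma norm_cexp_gauss (b u σ t : ℝ) :
    ‖Complex.exp (b * ((σ + t * Complex.I : ℂ) - 2) ^ 2 + u * (σ + t * Complex.I))‖ =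
      Real.exp (b * ((σ - 2) ^ 2 - t ^ 2) + u * σ) := by
  have hexpand : b * ((σ + t * Complex.I : ℂ) - 2) ^ 2 + u * (σ + t * Complex.I) =
      (b * ((σ - 2) ^ 2 - t ^ 2) + u * σ : ℝ) +
        (b * 2 * (σ - 2) * t + u * t : ℝ) * Complex.I := by
    push_cast
    linear_combination (b * t ^ 2 : ℂ) * Complex.I_sq
  rw [Complex.norm_exp, hexpand, Complex.add_re, Complex.re_ofReal_mul, Complex.I_re,
    Complex.ofReal_re, mul_zero, add_zero]

lemma term_mul_cexp_gauss (b u t : ℝ) {a : ℕ → ℂ} (n : ℕ) (ha : a 0 = 0) :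
    LSeries.term a (2 + t * Complex.I) n *
        Complex.exp (b * ((2 + t * Complex.I : ℂ) - 2) ^ 2 + u * (2 + t * Complex.I)) =
      a n * Complex.exp ((-b : ℂ) * t ^ 2 + (Complex.I * (u - Real.log n : ℝ)) * t +
        (2 * (u - Real.log n) : ℝ)) := by
  rcases eq_or_ne n 0 with rfl | hn
  · simp [ha]
  · have hn' : (n : ℂ) ≠ 0 := by exact_mod_cast hn
    rw [LSeries.term_of_ne_zero hn, Complex.cpow_def_of_ne_zero hn', div_mul_eq_mul_div,
      mul_div_assoc, ← Complex.exp_sub, ← Complex.natCast_log]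
    congr 2
    push_cast
    linear_combination (b * t ^ 2 : ℂ) * Complex.I_sq

lemma norm_term_mul_cexp_gauss (b u t : ℝ) (a : ℕ → ℂ) (n : ℕ) :
    ‖LSeries.term a (2 + t * Complex.I) n *
        Complex.exp (b * ((2 + t * Complex.I : ℂ) - 2) ^ 2 + u * (2 + t * Complex.I))‖ =
      ‖LSeries.term a 2 n‖ * Real.exp (2 * u) * Real.exp (-b * t ^ 2) := by
  have hexp := norm_cexp_gauss b u 2 t
  rw [Complex.ofReal_ofNat] at hexp
  have hterm : ‖LSeries.term a (2 + t * Complex.I) n‖ = ‖LSeries.term a 2 n‖ := by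
    simp [LSeries.norm_term_eq]
  rw [norm_mul, hexp, hterm, mul_assoc, ← Real.exp_add]
  ring_nf

lemma integral_cexp_gauss {b : ℝ} (hb : 0 < b) (v : ℝ) :
    ∫ t : ℝ, Complex.exp ((-b : ℂ) * t ^ 2 + (Complex.I * v) * t + (2 * v : ℝ)) =
      (√(Real.pi / b) * gaussWeight b v : ℝ) := by
  have hb' : (b : ℂ) ≠ 0 := by exact_mod_cast hb.ne'
  have hroot : ((Real.pi : ℂ) / -(-b : ℂ)) ^ (1 / 2 : ℂ) = (√(Real.pi / b) : ℝ) := by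
    rw [Real.sqrt_eq_rpow, Complex.ofReal_cpow (by positivity)]
    push_cast
    simp
  have hexp : ((2 * v : ℝ) : ℂ) - (Complex.I * v) ^ 2 / (4 * (-b : ℂ)) =
      (2 * v - v ^ 2 / (4 * b) : ℝ) := by
    rw [mul_pow, Complex.I_sq]
    push_cast
    field_simp
  rw [integral_cexp_quadratic (by simpa using hb), hroot, hexp, gaussWeight, Complex.ofReal_mul,
    Complex.ofReal_exp]

lemma hasSum_zetaDiffCoeff_mul_gaussWeight {b : ℝ} (hb : 0 < b) (u : ℝ) :
    HasSum (fun n : ℕ => zetaDiffCoeff n * gaussWeight b (u - Real.log n))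
      ((√(Real.pi / b))⁻¹ * (∫ t : ℝ, zetaDiffGauss b u (2 + t * Complex.I)).re) := by
  set F : ℕ → ℝ → ℂ := fun n t => LSeries.term (fun n => zetaDiffCoeff n) (2 + t * Complex.I) n *
    Complex.exp (b * ((2 + t * Complex.I : ℂ) - 2) ^ 2 + u * (2 + t * Complex.I)) with hF
  have hFexp (n : ℕ) (t : ℝ) := term_mul_cexp_gauss b u t (a := fun n => zetaDiffCoeff n) n
    (by simp [zetaDiffCoeff])
  have hFnorm (n : ℕ) (t : ℝ) := norm_term_mul_cexp_gauss b u t (fun n => zetaDiffCoeff n) n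
  have hFint (n : ℕ) : ∫ t, F n t =
      (√(Real.pi / b) * (zetaDiffCoeff n * gaussWeight b (u - Real.log n)) : ℝ) := by
    simp_rw [hF, hFexp]
    rw [integral_const_mul, integral_cexp_gauss hb]
    push_cast
    ring
  have hFintegrable (n : ℕ) : Integrable (F n) := by
    refine ((integrable_exp_neg_mul_sq hb).const_mul _).mono' ?_
      (Filter.Eventually.of_forall fun t => (hFnorm n t).le)
    have hcongr : F n = _ := funext (hFexp n)
    rw [hcongr]
    exact Continuous.aestronglyMeasurable (by fun_prop)
  have hFsummable : Summable fun n => ∫ t, ‖F n t‖ := by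
    simp_rw [hF, hFnorm, integral_const_mul]
    exact ((lseriesHasSum_zetaDiffCoeff (s := 2) (by simp)).summable.norm.mul_right _).mul_right _
  have hFtsum (t : ℝ) : ∑' n, F n t = zetaDiffGauss b u (2 + t * Complex.I) := by
    rw [hF, tsum_mul_right, zetaDiffGauss]
    congr 1
    exact (lseriesHasSum_zetaDiffCoeff (by simp)).tsum_eq
  have hsum := hasSum_integral_of_summable_integral_norm hFintegrable hFsummable
  simp_rw [hFint, hFtsum] at hsum
  have hpos : 0 < √(Real.pi / b) := by positivity
  simpa only [inv_mul_cancel_left₀ hpos.ne', Complex.ofReal_re] using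
    (Complex.hasSum_re hsum).mul_left (√(Real.pi / b))⁻¹

end GaussianSum

/-! ### An upper bound for the smoothed sum when no prime is near `exp u` -/

section GaussianSumBound

open ArithmeticFunction

lemma gaussWeight_pos (b v : ℝ) : 0 < gaussWeight b v := Real.exp_pos _

lemma gaussWeight_le_four {b v : ℝ} (hb : 0 ≤ b) (hv : v ≤ Real.log 2) : gaussWeight b v ≤ 4 := by
  have hnonneg : 0 ≤ v ^ 2 / (4 * b) := by positivity
  calc gaussWeight b v ≤ Real.exp (2 * Real.log 2) := Real.exp_le_exp.2 (by linarith)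
    _ = 4 := by rw [two_mul, Real.exp_add, Real.exp_log two_pos]; norm_num

lemma one_div_sixteen_le_gaussWeight {b δ v : ℝ} (hb : 0 < b) (hδ : δ ≤ 1) (hbδ : δ ^ 2 ≤ b)
    (hv : -δ ≤ v) (hv0 : v ≤ 0) : 1 / 16 ≤ gaussWeight b v := by
  have hquad : v ^ 2 / (4 * b) ≤ 1 / 4 := by
    rw [div_le_iff₀ (by positivity)]
    nlinarith
  have hlog := Real.log_two_gt_d9
  calc (1 / 16 : ℝ) = Real.exp (-Real.log (2 ^ 4)) := by
        rw [Real.exp_neg, Real.exp_log (by norm_num)]; norm_num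
    _ ≤ gaussWeight b v := by
        rw [Real.log_pow]
        exact Real.exp_le_exp.2 (by push_cast; linarith)

lemma gaussWeight_le_of_le_abs {b v w : ℝ} (hb : 0 ≤ b) (hw : 0 ≤ w) (hv : w ≤ |v|) :
    gaussWeight b v ≤ Real.exp (2 * v - w ^ 2 / (4 * b)) := by
  have hsq : w ^ 2 ≤ v ^ 2 := by rw [← sq_abs v]; gcongr
  exact Real.exp_le_exp.2 (by gcongr)

lemma summable_vonMangoldt_div_sq : Summable fun n : ℕ => vonMangoldt n / (n : ℝ) ^ 2 := by
  refine (LSeriesSummable_vonMangoldt (s := 2) (by simp)).norm.congr fun n => ?_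
  rcases eq_or_ne n 0 with rfl | hn
  · simp
  · simp [hn, abs_of_nonneg vonMangoldt_nonneg]

lemma hasSum_indicator_coe {ι α : Type*} [AddCommMonoid α] [TopologicalSpace α] (s : Finset ι)
    (f : ι → α) : HasSum ((s : Set ι).indicator f) (∑ i ∈ s, f i) :=
  hasSum_subtype_iff_indicator.1 (s.hasSum f)

lemma sub_sub_one_le_card_Ioc_floor {x y : ℝ} (hx : 0 ≤ x) (hxy : x ≤ y) :
    y - x - 1 ≤ (Finset.Ioc ⌊x⌋₊ ⌊y⌋₊).card := by
  rw [Nat.card_Ioc, Nat.cast_sub (Nat.floor_le_floor hxy)]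
  linarith [Nat.lt_floor_add_one y, Nat.floor_le hx]

lemma indicator_one_div_sixteen_le_gaussWeight {b u δ : ℝ} (hb : 0 < b) (hδ : 0 ≤ δ) (hδ1 : δ ≤ 1)
    (hbδ : δ ^ 2 ≤ b) (n : ℕ) :
    Set.indicator (Finset.Ioc ⌊Real.exp u⌋₊ ⌊(1 + δ) * Real.exp u⌋₊ : Finset ℕ)
      (fun _ => (1 / 16 : ℝ)) n ≤ gaussWeight b (u - Real.log n) := by
  refine Set.indicator_apply_le' (fun hmem => ?_) fun _ => (gaussWeight_pos b _).le
  rw [Finset.mem_coe, Finset.mem_Ioc, Nat.floor_lt (Real.exp_nonneg u),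
    Nat.le_floor_iff (by positivity)] at hmem
  have hn : (0 : ℝ) < n := (Real.exp_pos u).trans hmem.1
  have hlower : u ≤ Real.log n := (Real.le_log_iff_exp_le hn).2 hmem.1.le
  have hupper : Real.log n ≤ u + δ :=
    calc Real.log n ≤ Real.log ((1 + δ) * Real.exp u) := Real.log_le_log hn hmem.2
      _ = Real.log (1 + δ) + u := by
          rw [Real.log_mul (by positivity) (Real.exp_ne_zero u), Real.log_exp]
      _ ≤ u + δ := by linarith [Real.log_le_sub_one_of_pos (show 0 < 1 + δ by positivity)]
  exact one_div_sixteen_le_gaussWeight hb hδ1 hbδ (by linarith) (by linarith)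

lemma vonMangoldt_mul_gaussWeight_le {b u w : ℝ} (hb : 0 ≤ b) (hw : 0 ≤ w) (hw2 : w ≤ Real.log 2)
    {n : ℕ} (hn : 0 < n) (hprime : n.Prime → w < |u - Real.log n|) :
    vonMangoldt n * gaussWeight b (u - Real.log n) ≤
      Set.indicator ({k ∈ Finset.Ioc 0 ⌊2 * Real.exp u⌋₊ | ¬ k.Prime} : Finset ℕ)
        (fun k => 4 * vonMangoldt k) n +
      Real.exp (2 * u - w ^ 2 / (4 * b)) * (vonMangoldt n / (n : ℝ) ^ 2) := by
  have hn0 : (0 : ℝ) < n := by exact_mod_cast hn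
  have hΛ : 0 ≤ vonMangoldt n := vonMangoldt_nonneg
  have htail : 0 ≤ Real.exp (2 * u - w ^ 2 / (4 * b)) * (vonMangoldt n / (n : ℝ) ^ 2) := by
    positivity
  rcases lt_or_ge w |u - Real.log n| with hfar | hnear
  · have hexp : Real.exp (2 * (u - Real.log n) - w ^ 2 / (4 * b)) =
        Real.exp (2 * u - w ^ 2 / (4 * b)) / (n : ℝ) ^ 2 := by
      rw [show 2 * (u - Real.log n) - w ^ 2 / (4 * b) =
        2 * u - w ^ 2 / (4 * b) - (Real.log n + Real.log n) by ring, Real.exp_sub, Real.exp_add,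
        Real.exp_log hn0, sq (n : ℝ)]
    calc vonMangoldt n * gaussWeight b (u - Real.log n)
        ≤ vonMangoldt n * (Real.exp (2 * u - w ^ 2 / (4 * b)) / (n : ℝ) ^ 2) := by
          rw [← hexp]
          gcongr
          exact gaussWeight_le_of_le_abs hb hw hfar.le
      _ = Real.exp (2 * u - w ^ 2 / (4 * b)) * (vonMangoldt n / (n : ℝ) ^ 2) := by ring
      _ ≤ _ := le_add_of_nonneg_left
          (Set.indicator_nonneg (fun k _ => mul_nonneg zero_le_four vonMangoldt_nonneg) n)
  · have hlog := abs_le.1 hnear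
    have hle : (n : ℝ) ≤ 2 * Real.exp u := by
      rw [← Real.exp_log two_pos, ← Real.exp_add, ← Real.log_le_iff_le_exp hn0]
      linarith
    rw [Set.indicator_of_mem]
    · nlinarith [gaussWeight_le_four hb (hlog.2.trans hw2)]
    · rw [Finset.mem_coe, Finset.mem_filter, Finset.mem_Ioc, Nat.le_floor_iff (by positivity)]
      exact ⟨⟨hn, hle⟩, fun hp => (hprime hp).not_ge hnear⟩

lemma hasSum_zetaDiffCoeff_mul_gaussWeight_le {b u w δ S : ℝ} (hb : 0 < b) (hδ : 0 ≤ δ)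
    (hδ1 : δ ≤ 1) (hbδ : δ ^ 2 ≤ b) (hw : 0 ≤ w) (hw2 : w ≤ Real.log 2)
    (hprime : ∀ p : ℕ, p.Prime → w < |u - Real.log p|)
    (hS : HasSum (fun n : ℕ => zetaDiffCoeff n * gaussWeight b (u - Real.log n)) S) :
    S ≤ 4 * (Chebyshev.psi (2 * Real.exp u) - Chebyshev.theta (2 * Real.exp u)) +
      Real.exp (2 * u - w ^ 2 / (4 * b)) * (∑' n : ℕ, vonMangoldt n / (n : ℝ) ^ 2) -
      (δ * Real.exp u - 1) / 16 := by
  have hcomposite := hasSum_indicator_coe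
    {k ∈ Finset.Ioc 0 ⌊2 * Real.exp u⌋₊ | ¬ k.Prime} fun k => 4 * vonMangoldt k
  rw [← Finset.mul_sum, ← Chebyshev.psi_sub_theta_eq_sum_not_prime] at hcomposite
  have htail := summable_vonMangoldt_div_sq.hasSum.mul_left (Real.exp (2 * u - w ^ 2 / (4 * b)))
  have hmain := hasSum_indicator_coe
    (Finset.Ioc ⌊Real.exp u⌋₊ ⌊(1 + δ) * Real.exp u⌋₊) fun _ => (1 / 16 : ℝ)
  have hcard := sub_sub_one_le_card_Ioc_floor (Real.exp_nonneg u)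
    (le_mul_of_one_le_left (Real.exp_nonneg u) (le_add_of_nonneg_right hδ))
  refine (hasSum_le (fun n => ?_) hS ((hcomposite.add htail).sub hmain)).trans ?_
  · rcases Nat.eq_zero_or_pos n with rfl | hn
    · simp [zetaDiffCoeff]
    · have hzeta : ((zeta n : ℕ) : ℝ) = 1 := by rw [zeta_apply_ne hn.ne', Nat.cast_one]
      rw [zetaDiffCoeff, hzeta, sub_mul, one_mul]
      exact sub_le_sub (vonMangoldt_mul_gaussWeight_le hb.le hw hw2 hn (hprime n))
        (indicator_one_div_sixteen_le_gaussWeight hb hδ hδ1 hbδ n)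
  · rw [Finset.sum_const, nsmul_eq_mul]
    linarith

end GaussianSumBound

/-! ### Shifting the contour of the smoothed integral -/

section ContourShift

open Complex MeasureTheory

lemma norm_integral_right_edge_le {f : ℂ → ℂ} {a c T H V : ℝ} (hac : a ≤ c) (hT : 0 ≤ T)
    (hf : DifferentiableOn ℂ f (Set.Icc a c ×ℂ Set.Icc (-T) T))
    (hH : ∀ x ∈ Set.Icc a c, ∀ y : ℝ, |y| = T → ‖f (x + y * I)‖ ≤ H)
    (hV : ∀ y ∈ Set.Icc (-T) T, ‖f (a + y * I)‖ ≤ V) :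
    ‖∫ y in (-T)..T, f (c + y * I)‖ ≤ 2 * (c - a) * H + 2 * T * V := by
  have hneg : -T ≤ T := by linarith
  have hhorizontal (y : ℝ) (hy : |y| = T) : ‖∫ x in a..c, f (x + y * I)‖ ≤ H * (c - a) := by
    rw [← abs_of_nonneg (sub_nonneg.2 hac)]
    refine intervalIntegral.norm_integral_le_of_norm_le_const fun x hx => hH x ?_ y hy
    exact Set.Ioc_subset_Icc_self (by rwa [Set.uIoc_of_le hac] at hx)
  have hleft : ‖∫ y in (-T)..T, f (a + y * I)‖ ≤ V * (T - -T) := by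
    rw [← abs_of_nonneg (sub_nonneg.2 hneg)]
    refine intervalIntegral.norm_integral_le_of_norm_le_const fun y hy => hV y ?_
    exact Set.Ioc_subset_Icc_self (by rwa [Set.uIoc_of_le hneg] at hy)
  have hrect := integral_boundary_rect_eq_zero_of_differentiableOn f ⟨a, -T⟩ ⟨c, T⟩
    (by simpa only [Set.uIcc_of_le hac, Set.uIcc_of_le hneg] using hf)
  have hright : I • ∫ y in (-T)..T, f (c + y * I) =
      I • (∫ y in (-T)..T, f (a + y * I)) - (∫ x in a..c, f (x + (-T : ℝ) * I)) +
        ∫ x in a..c, f (x + T * I) := by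
    linear_combination hrect
  calc ‖∫ y in (-T)..T, f (c + y * I)‖ = ‖I • ∫ y in (-T)..T, f (c + y * I)‖ := by
        rw [norm_smul, norm_I, one_mul]
    _ ≤ ‖∫ y in (-T)..T, f (a + y * I)‖ + ‖∫ x in a..c, f (x + (-T : ℝ) * I)‖ +
          ‖∫ x in a..c, f (x + T * I)‖ := by
        rw [hright]
        refine (norm_add_le _ _).trans (add_le_add_left ((norm_sub_le _ _).trans_eq ?_) _)
        rw [norm_smul, norm_I, one_mul]
    _ ≤ 2 * (c - a) * H + 2 * T * V := by
        linarith [hhorizontal (-T) (by rw [abs_neg, abs_of_nonneg hT]),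
          hhorizontal T (abs_of_nonneg hT)]

lemma norm_integral_compl_Ioc_le_of_gaussian_bound {E : Type*} [NormedAddCommGroup E]
    [NormedSpace ℝ E] {g : ℝ → E} {A b T : ℝ} (hb : 0 < b) (hT : 0 ≤ T)
    (hg : ∀ t, ‖g t‖ ≤ A * Real.exp (-b * t ^ 2)) :
    ‖∫ t in (Set.Ioc (-T) T)ᶜ, g t‖ ≤
      A * Real.exp (-(b * T ^ 2 / 2)) * √(Real.pi / (b / 2)) := by
  have hA : 0 ≤ A := by simpa using (norm_nonneg _).trans (hg 0)
  have hint := (integrable_exp_neg_mul_sq (half_pos hb)).const_mul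
    (A * Real.exp (-(b * T ^ 2 / 2)))
  have hdecay (t : ℝ) (ht : t ∈ (Set.Ioc (-T) T)ᶜ) :
      ‖g t‖ ≤ A * Real.exp (-(b * T ^ 2 / 2)) * Real.exp (-(b / 2) * t ^ 2) := by
    have hsq : T ^ 2 ≤ t ^ 2 := by
      rw [Set.mem_compl_iff, Set.mem_Ioc, not_and_or, not_lt, not_le] at ht
      rcases ht with h | h <;> nlinarith
    refine (hg t).trans ?_
    rw [mul_assoc, ← Real.exp_add]
    gcongr
    nlinarith [mul_le_mul_of_nonneg_left hsq hb.le]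
  calc ‖∫ t in (Set.Ioc (-T) T)ᶜ, g t‖
      ≤ ∫ t in (Set.Ioc (-T) T)ᶜ,
          A * Real.exp (-(b * T ^ 2 / 2)) * Real.exp (-(b / 2) * t ^ 2) :=
        norm_integral_le_of_norm_le hint.integrableOn
          (ae_restrict_of_forall_mem measurableSet_Ioc.compl hdecay)
    _ ≤ ∫ t, A * Real.exp (-(b * T ^ 2 / 2)) * Real.exp (-(b / 2) * t ^ 2) :=
        setIntegral_le_integral hint (Filter.Eventually.of_forall fun t => by positivity)
    _ = A * Real.exp (-(b * T ^ 2 / 2)) * √(Real.pi / (b / 2)) := by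
        rw [integral_const_mul, integral_gaussian]

lemma exists_norm_zetaDiff_two_le :
    ∃ K : ℝ, 0 < K ∧ ∀ t : ℝ, ‖zetaDiff (2 + t * I)‖ ≤ K := by
  set a : ℕ → ℂ := fun n => (zetaDiffCoeff n : ℂ)
  have hsum : Summable fun n => ‖LSeries.term a 2 n‖ :=
    (lseriesHasSum_zetaDiffCoeff (s := 2) (by simp)).summable.norm
  refine ⟨(∑' n, ‖LSeries.term a 2 n‖) + 1,
    add_pos_of_nonneg_of_pos (tsum_nonneg fun n => norm_nonneg _) one_pos, fun t => ?_⟩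
  have hzeta : HasSum (LSeries.term a (2 + t * I)) (zetaDiff (2 + t * I)) :=
    lseriesHasSum_zetaDiffCoeff (by simp)
  have hterm (n : ℕ) : ‖LSeries.term a (2 + t * I) n‖ ≤ ‖LSeries.term a 2 n‖ := by
    simp [LSeries.norm_term_eq]
  exact hzeta.tsum_eq ▸ (tsum_of_norm_bounded hsum.hasSum hterm).trans (le_add_of_nonneg_right
    zero_le_one)

lemma differentiableAt_zetaDiffGauss (b u : ℝ) {s : ℂ} (hs : riemannZeta₁ s ≠ 0) :
    DifferentiableAt ℂ (zetaDiffGauss b u) s :=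
  (differentiableAt_zetaDiff hs).mul (by fun_prop)

lemma continuous_zetaDiffGauss_two (b u : ℝ) :
    Continuous fun t : ℝ => zetaDiffGauss b u (2 + t * I) := by
  refine continuous_iff_continuousAt.2 fun t => ?_
  have hzeta : riemannZeta₁ (2 + t * I) ≠ 0 :=
    riemannZeta₁_ne_zero (riemannZeta_ne_zero_of_one_le_re (by simp))
  exact ContinuousAt.comp (f := fun t : ℝ => (2 : ℂ) + t * I)
    (differentiableAt_zetaDiffGauss b u hzeta).continuousAt (by fun_prop)

lemma norm_zetaDiffGauss (b u σ t : ℝ) :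
    ‖zetaDiffGauss b u (σ + t * I)‖ =
      ‖zetaDiff (σ + t * I)‖ * Real.exp (b * ((σ - 2) ^ 2 - t ^ 2) + u * σ) := by
  rw [zetaDiffGauss, norm_mul, norm_cexp_gauss]

lemma norm_zetaDiffGauss_two_le (b u : ℝ) {K t : ℝ} (hK : ‖zetaDiff (2 + t * I)‖ ≤ K) :
    ‖zetaDiffGauss b u (2 + t * I)‖ ≤ K * Real.exp (2 * u) * Real.exp (-b * t ^ 2) := by
  have hexp := norm_zetaDiffGauss b u 2 t
  rw [ofReal_ofNat] at hexp
  rw [hexp, mul_assoc K, ← Real.exp_add]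
  exact mul_le_mul hK (Real.exp_le_exp.2 (by linarith)) (Real.exp_pos _).le
    ((norm_nonneg _).trans hK)

lemma norm_intervalIntegral_zetaDiffGauss_le {b u a M T : ℝ} (hb : 0 < b) (hb1 : b ≤ 1)
    (hu : 0 ≤ u) (ha : 0 ≤ a) (ha1 : a ≤ 1) (hM : 0 ≤ M) (hT : 0 ≤ T)
    (hstrip : ∀ s : ℂ, 1 - a ≤ s.re → s.re ≤ 2 → |s.im| ≤ T →
      riemannZeta₁ s ≠ 0 ∧ ‖zetaDiff s‖ ≤ M) :
    ‖∫ t in (-T)..T, zetaDiffGauss b u (2 + t * I)‖ ≤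
      M * (4 * Real.exp (4 + 2 * u - b * T ^ 2) + 2 * T * Real.exp (4 + u * (1 - a))) := by
  have hnorm (σ t : ℝ) (hσ1 : 1 - a ≤ σ) (hσ2 : σ ≤ 2) (ht : |t| ≤ T) :
      ‖zetaDiffGauss b u (σ + t * I)‖ ≤ M * Real.exp (4 - b * t ^ 2 + u * σ) := by
    have hsq : (σ - 2) ^ 2 ≤ 4 := by nlinarith
    rw [norm_zetaDiffGauss]
    gcongr
    · exact (hstrip _ (by simpa using hσ1) (by simpa using hσ2) (by simpa using ht)).2
    · nlinarith
  have hrect : ‖∫ t in (-T)..T, zetaDiffGauss b u ((2 : ℝ) + t * I)‖ ≤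
      2 * (2 - (1 - a)) * (M * Real.exp (4 + 2 * u - b * T ^ 2)) +
        2 * T * (M * Real.exp (4 + u * (1 - a))) := by
    refine norm_integral_right_edge_le (by linarith) hT (fun s hs => ?_) (fun σ hσ t ht => ?_)
      fun t ht => ?_
    · exact (differentiableAt_zetaDiffGauss b u (hstrip s hs.1.1 hs.1.2 (abs_le.2 hs.2)).1)
        |>.differentiableWithinAt
    · refine (hnorm σ t hσ.1 hσ.2 ht.le).trans ?_
      rw [← sq_abs t, ht]
      gcongr
      nlinarith [hσ.2]
    · refine (hnorm (1 - a) t le_rfl (by linarith) (abs_le.2 ht)).trans ?_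
      gcongr
      nlinarith [sq_nonneg t]
  have hwidth : 2 * (2 - (1 - a)) * (M * Real.exp (4 + 2 * u - b * T ^ 2)) ≤
      4 * (M * Real.exp (4 + 2 * u - b * T ^ 2)) := by
    gcongr
    linarith
  rw [ofReal_ofNat] at hrect
  linarith

lemma norm_integral_zetaDiffGauss_le {b u a M K T : ℝ} (hb : 0 < b) (hb1 : b ≤ 1)
    (hu : 0 ≤ u) (ha : 0 ≤ a) (ha1 : a ≤ 1) (hM : 0 ≤ M) (hT : 0 ≤ T)
    (hstrip : ∀ s : ℂ, 1 - a ≤ s.re → s.re ≤ 2 → |s.im| ≤ T →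
      riemannZeta₁ s ≠ 0 ∧ ‖zetaDiff s‖ ≤ M)
    (hK : ∀ t : ℝ, ‖zetaDiff (2 + t * I)‖ ≤ K) :
    ‖∫ t : ℝ, zetaDiffGauss b u (2 + t * I)‖ ≤
      K * Real.exp (2 * u - b * T ^ 2 / 2) * (2 * √(Real.pi / b)) +
      M * (4 * Real.exp (4 + 2 * u - b * T ^ 2) + 2 * T * Real.exp (4 + u * (1 - a))) := by
  have hgauss (t : ℝ) := norm_zetaDiffGauss_two_le b u (hK t)
  have hint : Integrable fun t : ℝ => zetaDiffGauss b u (2 + t * I) :=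
    ((integrable_exp_neg_mul_sq hb).const_mul _).mono'
      (continuous_zetaDiffGauss_two b u).aestronglyMeasurable (Filter.Eventually.of_forall hgauss)
  have hK0 : 0 ≤ K := (norm_nonneg _).trans (hK 0)
  have hsqrt : √(Real.pi / (b / 2)) ≤ 2 * √(Real.pi / b) := by
    have hle : Real.pi / (b / 2) ≤ 2 ^ 2 * (Real.pi / b) := by
      rw [show Real.pi / (b / 2) = 2 * (Real.pi / b) by field_simp]
      gcongr
      norm_num
    refine (Real.sqrt_le_sqrt hle).trans_eq ?_
    rw [Real.sqrt_mul (by positivity), Real.sqrt_sq zero_le_two]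
  have htail : ‖∫ t in (Set.Ioc (-T) T)ᶜ, zetaDiffGauss b u (2 + t * I)‖ ≤
      K * Real.exp (2 * u - b * T ^ 2 / 2) * (2 * √(Real.pi / b)) := by
    refine (norm_integral_compl_Ioc_le_of_gaussian_bound hb hT hgauss).trans ?_
    rw [mul_assoc K, ← Real.exp_add, ← sub_eq_add_neg]
    gcongr
  rw [← integral_add_compl measurableSet_Ioc hint,
    ← intervalIntegral.integral_of_le (by linarith : -T ≤ T), add_comm]
  exact (norm_add_le _ _).trans
    (add_le_add htail (norm_intervalIntegral_zetaDiffGauss_le hb hb1 hu ha ha1 hM hT hstrip))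

end ContourShift

/-! ### Primes in very short logarithmic intervals -/

section ShortIntervals

open ArithmeticFunction Filter

lemma eventually_mul_pow_le_exp (c : ℝ) (k : ℕ) : ∀ᶠ x : ℝ in atTop, c * x ^ k ≤ Real.exp x := by
  have hlittle := (Real.isLittleO_pow_exp_atTop (n := k)).const_mul_left c
  filter_upwards [hlittle.bound one_pos] with x hx
  simpa using (le_abs_self _).trans hx

lemma psi_sub_theta_two_mul_exp_le {u : ℝ} (hu : 0 ≤ u) :
    Chebyshev.psi (2 * Real.exp u) - Chebyshev.theta (2 * Real.exp u) ≤
      16 * Real.exp (3 * u / 4) := by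
  have hone : 1 ≤ 2 * Real.exp u := by linarith [Real.one_le_exp hu]
  have hsqrt : √(2 * Real.exp u) ≤ 2 * Real.exp (u / 2) := by
    rw [Real.sqrt_le_left (by positivity), mul_pow, ← Real.exp_nat_mul,
      show ((2 : ℕ) : ℝ) * (u / 2) = u by push_cast; ring]
    linarith [Real.exp_pos u]
  have hlog : Real.log (2 * Real.exp u) ≤ 4 * Real.exp (u / 4) := by
    rw [Real.log_mul two_ne_zero (Real.exp_ne_zero u), Real.log_exp]
    linarith [Real.add_one_le_exp (u / 4), Real.log_two_lt_d9]
  have hlog0 : 0 ≤ Real.log (2 * Real.exp u) := Real.log_nonneg hone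
  calc Chebyshev.psi (2 * Real.exp u) - Chebyshev.theta (2 * Real.exp u)
      ≤ 2 * √(2 * Real.exp u) * Real.log (2 * Real.exp u) := Chebyshev.psi_sub_theta_le hone
    _ ≤ 2 * (2 * Real.exp (u / 2)) * (4 * Real.exp (u / 4)) := by gcongr
    _ = 16 * Real.exp (3 * u / 4) := by
        rw [show 3 * u / 4 = u / 2 + u / 4 by ring, Real.exp_add]; ring

lemma four_mul_le_of_pow_twenty_le {L u : ℝ} (hL : 2 ≤ L) (hu : L ^ 20 ≤ u) : 4 * L ≤ u := by
  calc 4 * L ≤ L ^ 3 := by nlinarith [mul_nonneg (by linarith : 0 ≤ L) (sub_nonneg.2 hL)]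
    _ ≤ L ^ 20 := pow_le_pow_right₀ (by linarith) (by norm_num)
    _ ≤ u := hu

-- The choice `u ≥ L ^ 20` makes the gain `exp (-κ * u / L ^ 9)` from the zero-free region
-- smaller than `exp (-3 * L)`, which beats the length `exp L` of the segment.
lemma pow_nine_mul_contour_le {κ L u : ℝ} (hL : 2 ≤ L) (hκ : 3 ≤ κ * L)
    (hexp : L ^ 9 ≤ Real.exp L) (hu : L ^ 20 ≤ u) :
    L ^ 9 * (4 * Real.exp (4 + 2 * u - u ^ 2) +
      2 * Real.exp L * Real.exp (4 + u * (1 - κ / L ^ 9))) ≤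
      6 * Real.exp 4 * Real.exp (u - L) := by
  have hu4 := four_mul_le_of_pow_twenty_le hL hu
  have hgain : 3 * L ≤ u * (κ / L ^ 9) := by
    have hκ0 : 0 ≤ κ := by by_contra! hneg; nlinarith
    rw [mul_div_assoc', le_div_iff₀ (by positivity)]
    calc 3 * L * L ^ 9 ≤ κ * L * L * L ^ 9 := by gcongr
      _ = κ * L ^ 11 := by ring
      _ ≤ κ * L ^ 20 := by gcongr <;> linarith
      _ ≤ u * κ := by nlinarith
  have htop : Real.exp L * Real.exp (4 + 2 * u - u ^ 2) ≤ Real.exp 4 * Real.exp (u - L) := by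
    rw [← Real.exp_add, ← Real.exp_add]
    exact Real.exp_le_exp.2 (by nlinarith)
  have hleft : Real.exp L * (Real.exp L * Real.exp (4 + u * (1 - κ / L ^ 9))) ≤
      Real.exp 4 * Real.exp (u - L) := by
    rw [← Real.exp_add, ← Real.exp_add, ← Real.exp_add]
    exact Real.exp_le_exp.2 (by linarith)
  calc _ ≤ Real.exp L * (4 * Real.exp (4 + 2 * u - u ^ 2) +
          2 * Real.exp L * Real.exp (4 + u * (1 - κ / L ^ 9))) := by gcongr
    _ ≤ 6 * Real.exp 4 * Real.exp (u - L) := by linarith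

lemma exists_eventually_norm_integral_zetaDiffGauss_le :
    ∃ A : ℝ, ∀ᶠ L : ℝ in atTop, ∀ u : ℝ, L ^ 20 ≤ u → u ≤ Real.exp L →
      ‖∫ t : ℝ, zetaDiffGauss ((u / Real.exp L) ^ 2) u (2 + t * Complex.I)‖ ≤
        √(Real.pi / (u / Real.exp L) ^ 2) * (A * Real.exp (u - L)) := by
  obtain ⟨κ, B, hκ, hκ4, hB, hstrip⟩ := exists_norm_zetaDiff_le
  obtain ⟨K, hK0, hK⟩ := exists_norm_zetaDiff_two_le
  refine ⟨2 * K + B * (6 * Real.exp 4), ?_⟩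
  filter_upwards [eventually_ge_atTop 2, eventually_ge_atTop (3 / κ),
    eventually_mul_pow_le_exp 1 9] with L hL hLκ hexp u hu huT
  have hu4 := four_mul_le_of_pow_twenty_le hL hu
  have hu0 : 0 < u := by linarith
  have hL9 : 1 ≤ L ^ 9 := one_le_pow₀ (by linarith)
  set b := (u / Real.exp L) ^ 2 with hb
  have hb0 : 0 < b := by positivity
  have hb1 : b ≤ 1 := pow_le_one₀ (by positivity) ((div_le_one (Real.exp_pos L)).2 huT)
  have hbT : b * Real.exp L ^ 2 = u ^ 2 := by rw [hb]; field_simp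
  have hκL : κ / L ^ 9 ≤ 1 := (div_le_one (by positivity)).2 (by linarith)
  have hsqrt : 1 ≤ √(Real.pi / b) := by
    rw [Real.one_le_sqrt, one_le_div hb0]
    linarith [Real.pi_gt_three]
  have hint := norm_integral_zetaDiffGauss_le (M := B * L ^ 9) hb0 hb1 hu0.le
    (by positivity : 0 ≤ κ / L ^ 9) hκL (by positivity) (Real.exp_nonneg L)
    (fun s h1 h2 h3 => hstrip hL h1 h2 h3) hK
  rw [hbT] at hint
  have hcontour := pow_nine_mul_contour_le hL (by rwa [div_le_iff₀' hκ] at hLκ)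
    (by simpa using hexp) hu
  have htail : Real.exp (2 * u - u ^ 2 / 2) ≤ Real.exp (u - L) :=
    Real.exp_le_exp.2 (by nlinarith)
  calc _ ≤ _ := hint
    _ ≤ K * Real.exp (u - L) * (2 * √(Real.pi / b)) +
          √(Real.pi / b) * (B * (6 * Real.exp 4 * Real.exp (u - L))) := by
        refine add_le_add (by gcongr) ?_
        rw [mul_assoc B]
        exact (mul_le_mul_of_nonneg_left hcontour hB.le).trans
          (le_mul_of_one_le_left (by positivity) hsqrt)
    _ = _ := by ring

lemma two_mul_sq_div_exp_le_half {L u : ℝ} (hexp : 16 * L ^ 40 ≤ Real.exp L) (hu0 : 0 ≤ u)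
    (hu : u ≤ 2 * L ^ 20) : 2 * u ^ 2 / Real.exp L ≤ 1 / 2 := by
  rw [div_le_iff₀ (Real.exp_pos L)]
  nlinarith [pow_le_pow_left₀ hu0 hu 2]

lemma le_of_forall_prime_lt_abs_sub_log {A L u : ℝ} (hL : 2 ≤ L) (hu : 4 * L ≤ u)
    (hwidth : 2 * u ^ 2 / Real.exp L ≤ 1 / 2)
    (hint : ‖∫ t : ℝ, zetaDiffGauss ((u / Real.exp L) ^ 2) u (2 + t * Complex.I)‖ ≤
      √(Real.pi / (u / Real.exp L) ^ 2) * (A * Real.exp (u - L)))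
    (hprime : ∀ p : ℕ, p.Prime → 2 * u ^ 2 / Real.exp L < |u - Real.log p|) :
    u ≤ 16 * (A + 64 + ∑' n : ℕ, vonMangoldt n / (n : ℝ) ^ 2) + 1 := by
  have hu0 : 0 < u := by linarith
  have huT : u ≤ Real.exp L := by
    rw [div_le_iff₀ (Real.exp_pos L)] at hwidth
    nlinarith
  set δ := u / Real.exp L with hδ
  have hδ0 : 0 < δ := by positivity
  have hw : 2 * δ * u = 2 * u ^ 2 / Real.exp L := by rw [hδ]; ring
  have hsum := hasSum_zetaDiffCoeff_mul_gaussWeight_le (w := 2 * δ * u) (pow_pos hδ0 2) hδ0.le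
    ((div_le_one (Real.exp_pos L)).2 huT) le_rfl (by positivity)
    (by linarith [Real.log_two_gt_d9]) (by rwa [hw])
    (hasSum_zetaDiffCoeff_mul_gaussWeight (pow_pos hδ0 2) u)
  have hlower : -(A * Real.exp (u - L)) ≤ (√(Real.pi / δ ^ 2))⁻¹ *
      (∫ t : ℝ, zetaDiffGauss (δ ^ 2) u (2 + t * Complex.I)).re := by
    rw [le_inv_mul_iff₀ (by positivity), mul_neg]
    exact neg_le_of_abs_le ((Complex.abs_re_le_norm _).trans hint)
  have hcomposite : 4 * (Chebyshev.psi (2 * Real.exp u) - Chebyshev.theta (2 * Real.exp u)) ≤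
      64 * Real.exp (u - L) := by
    have hexp : Real.exp (3 * u / 4) ≤ Real.exp (u - L) := Real.exp_le_exp.2 (by linarith)
    linarith [psi_sub_theta_two_mul_exp_le hu0.le]
  have htail : Real.exp (2 * u - (2 * δ * u) ^ 2 / (4 * δ ^ 2)) ≤ Real.exp (u - L) := by
    rw [show (2 * δ * u) ^ 2 / (4 * δ ^ 2) = u ^ 2 by field_simp; ring]
    exact Real.exp_le_exp.2 (by nlinarith)
  have hmain : δ * Real.exp u = u * Real.exp (u - L) := by rw [Real.exp_sub, hδ]; ring
  have hone : 1 ≤ Real.exp (u - L) := Real.one_le_exp (by linarith)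
  have hM : 0 ≤ ∑' n : ℕ, vonMangoldt n / (n : ℝ) ^ 2 :=
    tsum_nonneg fun n => div_nonneg vonMangoldt_nonneg (sq_nonneg _)
  refine le_of_mul_le_mul_right ?_ (Real.exp_pos (u - L))
  linarith [mul_le_mul_of_nonneg_right htail hM]

theorem eventually_exists_prime_log_near : ∀ᶠ L : ℝ in atTop, ∀ u : ℝ, L ^ 20 ≤ u →
    u ≤ 2 * L ^ 20 → ∃ p : ℕ, p.Prime ∧ |u - Real.log p| ≤ 2 * u ^ 2 / Real.exp L := by
  obtain ⟨A, hA⟩ := exists_eventually_norm_integral_zetaDiffGauss_le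
  filter_upwards [eventually_ge_atTop 2, eventually_mul_pow_le_exp 16 40, hA,
    eventually_gt_atTop (16 * (A + 64 + ∑' n : ℕ, vonMangoldt n / (n : ℝ) ^ 2) + 1)]
    with L hL hexp hint hLC u hu hu2
  by_contra! hprime
  have hu4 := four_mul_le_of_pow_twenty_le hL hu
  have hwidth := two_mul_sq_div_exp_le_half hexp (by linarith : 0 ≤ u) hu2
  have huT : u ≤ Real.exp L := by
    rw [div_le_iff₀ (Real.exp_pos L)] at hwidth
    nlinarith
  linarith [le_of_forall_prime_lt_abs_sub_log hL hu4 hwidth (hint u hu huT) hprime]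

end ShortIntervals

/-! ### Interleaving the increases and the decreases -/

section Interleaving

open Filter

lemma pow_three_lt_of_three_mul_log_lt {n m : ℕ} (h : 3 * Real.log n < Real.log m) :
    n ^ 3 < m := by
  by_contra! hle
  have hlog : Real.log m ≤ Real.log ((n : ℝ) ^ 3) := by
    rcases Nat.eq_zero_or_pos m with rfl | hm
    · rw [Nat.cast_zero, Real.log_zero, Real.log_pow]
      exact mul_nonneg (Nat.cast_nonneg 3) (Real.log_natCast_nonneg n)
    · exact Real.log_le_log (by exact_mod_cast hm) (by exact_mod_cast hle)
  rw [Real.log_pow, Nat.cast_ofNat] at hlog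
  linarith

lemma natLog_two_le_two_mul_log (n : ℕ) : (Nat.log 2 n : ℝ) ≤ 2 * Real.log n := by
  nlinarith [natLog_two_mul_log_two_le n, Nat.cast_nonneg (α := ℝ) (Nat.log 2 n),
    Real.log_two_gt_d9]

lemma exists_natLog_two_eq_add {n m : ℕ} {U : ℝ} (hU : 4 * (1 + Real.log n) ≤ U)
    (hm : U ≤ Real.log m) : ∃ k : ℕ, k + Nat.log 2 n + 1 = Nat.log 2 m ∧ U / 2 ≤ k := by
  have hlogn := Real.log_natCast_nonneg n
  have hln2 := Real.log_two_gt_d9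
  have hln2' := Real.log_two_lt_d9
  have hmlog := log_le_natLog_two_add_one_mul_log_two m
  have hm' : U ≤ Nat.log 2 m + 1 := by nlinarith [Nat.cast_nonneg (α := ℝ) (Nat.log 2 m)]
  have hn' := natLog_two_le_two_mul_log n
  have hle : Nat.log 2 n + 1 ≤ Nat.log 2 m := by
    have hcast : (Nat.log 2 n : ℝ) + 1 ≤ Nat.log 2 m := by linarith
    exact_mod_cast hcast
  refine ⟨Nat.log 2 m - (Nat.log 2 n + 1), by omega, ?_⟩
  rw [Nat.cast_sub hle]
  push_cast
  linarith

lemma delta_one_lt_delta_zero_of_log {n m : ℕ} {U : ℝ} (hn : 2 ^ 102 ≤ Real.log n)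
    (hU : 32 * (1 + Real.log n) ^ 2 ≤ U) (hlogU : Real.log U = Real.log n / 100)
    (hm : U ≤ Real.log m) (hm' : Real.log m ≤ U + 3) : delta 1 n m < delta 0 n m := by
  have hln2 := Real.log_two_gt_d9
  have hln2' := Real.log_two_lt_d9
  have hlarge : (100 : ℝ) ≤ Real.log n := le_trans (by norm_num) hn
  have hU0 : 4 * (1 + Real.log n) ≤ U := by nlinarith
  have hn1 : 1 ≤ n := by
    rcases Nat.eq_zero_or_pos n with rfl | hn0
    · norm_num at hlarge
    · exact hn0
  obtain ⟨k, hk, hUk⟩ := exists_natLog_two_eq_add hU0 hm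
  have hk0 : (0 : ℝ) < k := by linarith
  have hnlog := natLog_two_le_two_mul_log n
  have hmlog : (Nat.log 2 m : ℝ) ≤ 2 * U := by
    nlinarith [natLog_two_mul_log_two_le m, Nat.cast_nonneg (α := ℝ) (Nat.log 2 m)]
  have hmlog0 : (0 : ℝ) < Nat.log 2 m := by
    rw [← hk]
    push_cast
    positivity
  have hloglog : Real.log (Nat.log 2 m) ≤ 0.7 + Real.log n / 100 := by
    rw [← hlogU]
    have hle := Real.log_le_log hmlog0 hmlog
    rw [Real.log_mul two_ne_zero (by linarith)] at hle
    linarith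
  have hblocks : 8 * (((Nat.log 2 n : ℝ) + 2) / k) * (1 + Real.log n) ≤ 1 := by
    rw [mul_div_assoc', div_mul_eq_mul_div, div_le_one hk0]
    nlinarith
  have hsieve : (1 + 2 * Real.log n) * (8 / ((100 : ℕ) * Real.log 2)) ≤
      (1 + 2 * Real.log n) * 0.116 := by
    refine mul_le_mul_of_nonneg_left ?_ (by linarith)
    rw [div_le_iff₀ (by positivity)]
    push_cast
    linarith
  refine delta_one_lt_delta_zero (K := 100) hn1
    (pow_three_lt_of_three_mul_log_lt (by linarith)) (by norm_num) (by exact_mod_cast hk0) hk ?_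
  norm_num at hn hloglog hsieve ⊢
  linarith

lemma eventually_delta_one_lt_delta_zero : ∀ᶠ n : ℕ in atTop, ∀ m : ℕ,
    (n : ℝ) ^ (1 / 100 : ℝ) ≤ Real.log m → Real.log m ≤ (n : ℝ) ^ (1 / 100 : ℝ) + 3 →
      n ^ 3 < m ∧ delta 1 n m < delta 0 n m := by
  have hlog : Tendsto (fun n : ℕ => Real.log n) atTop atTop :=
    Real.tendsto_log_atTop.comp tendsto_natCast_atTop_atTop
  filter_upwards [eventually_gt_atTop 0, hlog.eventually_ge_atTop (2 ^ 102),
    (hlog.atTop_div_const (by norm_num : (0 : ℝ) < 100)).eventually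
      (eventually_mul_pow_le_exp (128 * 100 ^ 2) 2)] with n hn0 hn hexp m hm hm'
  have hn0' : (0 : ℝ) < n := by exact_mod_cast hn0
  have hU : 32 * (1 + Real.log n) ^ 2 ≤ (n : ℝ) ^ (1 / 100 : ℝ) := by
    rw [Real.rpow_def_of_pos hn0', mul_one_div]
    nlinarith
  refine ⟨pow_three_lt_of_three_mul_log_lt (by nlinarith),
    delta_one_lt_delta_zero_of_log hn hU ?_ hm hm'⟩
  rw [Real.log_rpow hn0', one_div_mul_eq_div]

lemma four_mul_le_pow_three {n : ℕ} (hn : 2 ≤ n) : 4 * n ≤ n ^ 3 := by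
  calc 4 * n = 2 ^ 2 * n := by ring
    _ ≤ n ^ 2 * n := by gcongr
    _ = n ^ 3 := by ring

lemma exists_delta_one_lt_add_one_log_near {n : ℕ} {U v w : ℝ} (hn : 2 ≤ n)
    (hδ : ∀ m : ℕ, U ≤ Real.log m → Real.log m ≤ U + 3 → n ^ 3 < m ∧ delta 1 n m < delta 0 n m)
    (hprime : ∀ u ∈ Set.Icc U (U + 2), ∃ p : ℕ, p.Prime ∧ |u - Real.log p| < w)
    (hw : w ≤ 1 / 4) (hv : v ∈ Set.Icc (U + 1) (U + 2)) :
    ∃ m : ℕ, 0 < m ∧ (n + 2 ≤ m ∧ delta 1 n m < delta 1 n (m + 1)) ∧ |v - Real.log m| < w := by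
  obtain ⟨p, hp, hvp⟩ := hprime v ⟨by linarith [hv.1], hv.2⟩
  have hbounds := abs_lt.1 hvp
  obtain ⟨hnp, hlt⟩ := hδ p (by linarith [hv.1]) (by linarith [hv.2])
  have hcube := four_mul_le_pow_three hn
  exact ⟨p, hp.pos, ⟨by omega, delta_one_lt_add_one_of_prime hp (by omega) hlt⟩, hvp⟩

lemma exists_delta_one_add_one_lt_log_near {n : ℕ} {U v w : ℝ} (hn : 2 ≤ n)
    (hδ : ∀ m : ℕ, U ≤ Real.log m → Real.log m ≤ U + 3 → n ^ 3 < m ∧ delta 1 n m < delta 0 n m)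
    (hprime : ∀ u ∈ Set.Icc U (U + 2), ∃ p : ℕ, p.Prime ∧ |u - Real.log p| < w)
    (hw : w ≤ 1 / 4) (hv : v ∈ Set.Icc (U + 1) (U + 2)) :
    ∃ m : ℕ, 0 < m ∧ delta 1 n (m + 1) < delta 1 n m ∧ |v - Real.log m| < w := by
  have hln2 := Real.log_two_gt_d9
  have hln2' := Real.log_two_lt_d9
  obtain ⟨p, hp, hvp⟩ := hprime (v - Real.log 2) ⟨by linarith [hv.1], by linarith [hv.2]⟩
  have hlog : Real.log ((2 * p : ℕ) : ℝ) = Real.log 2 + Real.log p := by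
    rw [Nat.cast_mul, Nat.cast_ofNat, Real.log_mul two_ne_zero (by exact_mod_cast hp.ne_zero)]
  rw [sub_sub, ← hlog] at hvp
  have hbounds := abs_lt.1 hvp
  obtain ⟨hnp, -⟩ := hδ (2 * p) (by linarith [hv.1]) (by linarith [hv.2])
  have hcube := four_mul_le_pow_three hn
  exact ⟨2 * p, mul_pos two_pos hp.pos,
    delta_one_add_one_lt_of_two_mul_prime hn hp (by omega), hvp⟩

lemma exists_interleaved_of_log_dense {P Q : ℕ → Prop} {V w : ℝ} {t : ℕ} (hw : 0 < w)
    (hP : ∀ v ∈ Set.Icc V (V + 1), ∃ m : ℕ, 0 < m ∧ P m ∧ |v - Real.log m| < w)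
    (hQ : ∀ v ∈ Set.Icc V (V + 1), ∃ m : ℕ, 0 < m ∧ Q m ∧ |v - Real.log m| < w)
    (ht : 4 * w * t ≤ 1) :
    ∃ m m' : ℕ → ℕ, (∀ j, 1 ≤ j → j ≤ t → P (m j)) ∧ (∀ j, 1 ≤ j → j ≤ t → Q (m' j)) ∧
      (∀ j, 1 ≤ j → j ≤ t → m j < m' j) ∧ ∀ j, 1 ≤ j → j < t → m' j < m (j + 1) := by
  choose! f hf0 hfP hf using hP
  choose! g hg0 hgQ hg using hQ
  have hmem (j : ℕ) (hj : 1 ≤ j) (hjt : j ≤ t) : V + 4 * w * (j - 1) ∈ Set.Icc V (V + 1) ∧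
      V + 4 * w * (j - 1) + 2 * w ∈ Set.Icc V (V + 1) := by
    have hj' : (1 : ℝ) ≤ j := by exact_mod_cast hj
    have hjt' : (j : ℝ) ≤ t := by exact_mod_cast hjt
    have hlower : 0 ≤ 4 * w * (j - 1) := mul_nonneg (by linarith) (by linarith)
    have hupper : 4 * w * j ≤ 4 * w * t := by gcongr
    refine ⟨⟨?_, ?_⟩, ?_, ?_⟩ <;> linarith
  have hlt {a b : ℕ} (ha : 0 < a) (hb : 0 < b) (h : Real.log a < Real.log b) : a < b := by
    exact_mod_cast (Real.log_lt_log_iff (by exact_mod_cast ha) (by exact_mod_cast hb)).1 h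
  refine ⟨fun j => f (V + 4 * w * (j - 1)), fun j => g (V + 4 * w * (j - 1) + 2 * w),
    fun j hj hjt => hfP _ (hmem j hj hjt).1, fun j hj hjt => hgQ _ (hmem j hj hjt).2,
    fun j hj hjt => ?_, fun j hj hjt => ?_⟩
  · obtain ⟨hm, hm'⟩ := hmem j hj hjt
    refine hlt (hf0 _ hm) (hg0 _ hm') ?_
    linarith [(abs_lt.1 (hf _ hm)).1, (abs_lt.1 (hg _ hm')).2]
  · obtain ⟨-, hm'⟩ := hmem j hj hjt.le
    obtain ⟨hm, -⟩ := hmem (j + 1) (by omega) hjt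
    refine hlt (hg0 _ hm') (hf0 _ hm) ?_
    have hnext := (abs_lt.1 (hf _ hm)).2
    push_cast at hnext ⊢
    linarith [(abs_lt.1 (hg _ hm')).1]

lemma exists_interleaved_delta_one {n t : ℕ} {U w : ℝ} (hn : 2 ≤ n)
    (hδ : ∀ m : ℕ, U ≤ Real.log m → Real.log m ≤ U + 3 → n ^ 3 < m ∧ delta 1 n m < delta 0 n m)
    (hprime : ∀ u ∈ Set.Icc U (U + 2), ∃ p : ℕ, p.Prime ∧ |u - Real.log p| < w)
    (hw : 0 < w) (ht : 4 * w * t ≤ 1) :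
    ∃ m m' : ℕ → ℕ, (∀ j, 1 ≤ j → j ≤ t → n + 2 ≤ m j) ∧ (∀ j, 1 ≤ j → j ≤ t → m j < m' j) ∧
      (∀ j, 1 ≤ j → j < t → m' j < m (j + 1)) ∧
      (∀ j, 1 ≤ j → j ≤ t → delta 1 n (m j) < delta 1 n (m j + 1)) ∧
      ∀ j, 1 ≤ j → j ≤ t → delta 1 n (m' j + 1) < delta 1 n (m' j) := by
  rcases t.eq_zero_or_pos with rfl | ht0
  · refine ⟨id, id, ?_, ?_, ?_, ?_, ?_⟩ <;> intros <;> omega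
  have ht1 : (1 : ℝ) ≤ t := by exact_mod_cast ht0
  have hw' : w ≤ 1 / 4 := by nlinarith
  have hIcc {v : ℝ} (hv : v ∈ Set.Icc (U + 1) (U + 1 + 1)) : v ∈ Set.Icc (U + 1) (U + 2) :=
    ⟨hv.1, by linarith [hv.2]⟩
  obtain ⟨m, m', hm, hm', hlt, hlt'⟩ := exists_interleaved_of_log_dense hw
    (fun v hv => exists_delta_one_lt_add_one_log_near hn hδ hprime hw' (hIcc hv))
    (fun v hv => exists_delta_one_add_one_lt_log_near hn hδ hprime hw' (hIcc hv)) ht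
  exact ⟨m, m', fun j h1 hj => (hm j h1 hj).1, hlt, hlt', fun j h1 hj => (hm j h1 hj).2, hm'⟩

lemma eventually_exists_prime_log_lt : ∀ᶠ L : ℝ in atTop,
    ∀ u ∈ Set.Icc (L ^ 20) (L ^ 20 + 2),
      ∃ p : ℕ, p.Prime ∧ |u - Real.log p| < 9 * L ^ 40 / Real.exp L := by
  filter_upwards [eventually_exists_prime_log_near, eventually_ge_atTop 2] with L hprime hL u hu
  have hL20 : 2 ≤ L ^ 20 := hL.trans (le_self_pow₀ (by linarith) (by norm_num))
  obtain ⟨p, hp, hup⟩ := hprime u hu.1 (by linarith [hu.2])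
  refine ⟨p, hp, hup.trans_lt (div_lt_div_of_pos_right ?_ (Real.exp_pos L))⟩
  nlinarith [hu.1, hu.2]

lemma eventually_mul_exp_sqrt_le_floor (C : ℝ) : ∀ᶠ L : ℝ in atTop,
    C * Real.exp √L ≤ ⌊Real.exp L / (36 * L ^ 40)⌋₊ := by
  filter_upwards [eventually_ge_atTop 4, (tendsto_id.atTop_div_const two_pos).eventually
    (eventually_mul_pow_le_exp (36 * (C + 1) * 2 ^ 40) 40)] with L hL hexp
  have hsqrt : √L ≤ L / 2 := by
    rw [Real.sqrt_le_left (by linarith)]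
    nlinarith
  have hmul : 36 * (C + 1) * L ^ 40 ≤ Real.exp (L / 2) := by
    rw [id, div_pow, mul_assoc, mul_div_cancel₀ _ (by norm_num)] at hexp
    exact hexp
  have hle : (C + 1) * Real.exp √L ≤ Real.exp L / (36 * L ^ 40) := by
    rw [le_div_iff₀ (by positivity)]
    calc (C + 1) * Real.exp √L * (36 * L ^ 40) = Real.exp √L * (36 * (C + 1) * L ^ 40) := by ring
      _ ≤ Real.exp √L * Real.exp (L / 2) := mul_le_mul_of_nonneg_left hmul (Real.exp_nonneg _)
      _ ≤ Real.exp (L / 2) * Real.exp (L / 2) := by gcongr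
      _ = Real.exp L := by rw [← Real.exp_add, add_halves]
  linarith [Nat.lt_floor_add_one (Real.exp L / (36 * L ^ 40)), Real.one_le_exp (Real.sqrt_nonneg L)]

lemma four_mul_mul_floor_le_one {L : ℝ} (hL : 0 < L) :
    4 * (9 * L ^ 40 / Real.exp L) * ⌊Real.exp L / (36 * L ^ 40)⌋₊ ≤ 1 := by
  calc 4 * (9 * L ^ 40 / Real.exp L) * ⌊Real.exp L / (36 * L ^ 40)⌋₊
    _ ≤ 4 * (9 * L ^ 40 / Real.exp L) * (Real.exp L / (36 * L ^ 40)) :=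
      mul_le_mul_of_nonneg_left (Nat.floor_le (by positivity)) (by positivity)
    _ = 1 := by field_simp; norm_num

end Interleaving

/-- There is a constant `c > 0` such that for every `C > 0` and all sufficiently
large `n`, there are `t ≥ C·exp(n^c)` pairwise interleaved indices
`m_1 < m_1' < m_2 < m_2' < ⋯ < m_t < m_t'`, all at least `n+2`, with
`δ_1(n, m_j + 1) > δ_1(n, m_j)` and `δ_1(n, m_j' + 1) < δ_1(n, m_j')` for all
`1 ≤ j ≤ t`: the sequence `(δ_1(n,m))_{m ≥ n+2}` has superpolynomially many
local maxima. -/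
theorem delta_one_many_local_maxima :
    ∃ c : ℝ, 0 < c ∧ ∀ C : ℝ, 0 < C → ∃ N : ℕ, ∀ n : ℕ, N ≤ n →
      ∃ t : ℕ, C * Real.exp ((n : ℝ) ^ c) ≤ (t : ℝ) ∧
      ∃ m m' : ℕ → ℕ,
        (∀ j : ℕ, 1 ≤ j → j ≤ t → n + 2 ≤ m j) ∧
        (∀ j : ℕ, 1 ≤ j → j ≤ t → m j < m' j) ∧
        (∀ j : ℕ, 1 ≤ j → j < t → m' j < m (j + 1)) ∧
        (∀ j : ℕ, 1 ≤ j → j ≤ t → delta 1 n (m j) < delta 1 n (m j + 1)) ∧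
        (∀ j : ℕ, 1 ≤ j → j ≤ t → delta 1 n (m' j + 1) < delta 1 n (m' j)) := by
  refine ⟨1 / 4000, by norm_num, fun C _ => Filter.eventually_atTop.1 ?_⟩
  have hL : Filter.Tendsto (fun n : ℕ => (n : ℝ) ^ (1 / 2000 : ℝ)) Filter.atTop Filter.atTop :=
    (tendsto_rpow_atTop (by norm_num)).comp tendsto_natCast_atTop_atTop
  filter_upwards [Filter.eventually_ge_atTop 2, eventually_delta_one_lt_delta_zero,
    hL.eventually eventually_exists_prime_log_lt,
    hL.eventually (eventually_mul_exp_sqrt_le_floor C)] with n hn hδ hprime hfloor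
  have hL0 : 0 < (n : ℝ) ^ (1 / 2000 : ℝ) := by positivity
  have hU : (n : ℝ) ^ (1 / 100 : ℝ) = ((n : ℝ) ^ (1 / 2000 : ℝ)) ^ 20 := by
    rw [← Real.rpow_mul_natCast n.cast_nonneg]
    norm_num
  have hc : (n : ℝ) ^ (1 / 4000 : ℝ) = √((n : ℝ) ^ (1 / 2000 : ℝ)) := by
    rw [Real.sqrt_eq_rpow, ← Real.rpow_mul n.cast_nonneg]
    norm_num
  rw [hU] at hδ
  rw [hc]
  exact ⟨_, hfloor, exists_interleaved_delta_one hn hδ hprime (by positivity)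
    (four_mul_mul_floor_le_one hL0)⟩
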